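/- arXiv:2201.02717 — 2 statements merged into one kernel-verified Lean document; each statement's English description precedes it below -/
import Mathlib

section
/- Let R be a finitely generated ℕ-graded k-algebra of Krull dimension d and let I be the ideal generated by a homogeneous system of parameters of R of degrees δ_1, …, δ_d. Then for every nonzero complex number y, F(R,R,I)(y) = e_R · Π_{j=1}^{d} (1 − e^{−iδ_j y})/(iy), where e_R is the Hilbert–Samuel multiplicity of R. -/
open Filter Complex

noncomputable section

/-- The Frobenius bracket power `I^{[q]}` of an ideal. -/
def bracketPow {R : Type*} [CommSemiring R] (I : Ideal R) (q : ℕ) : Ideal R :=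
  Ideal.span ((fun x : R => x ^ q) '' (I : Set R))

/-- `λ_k((M/N)_j)`. -/
def quotPieceDim (k : Type*) {R M : Type*} [Field k] [CommRing R] [Algebra k R]
    [AddCommGroup M] [Module R M] [Module k M] [IsScalarTower k R M]
    (ℳ : ℤ → Submodule k M) (N : Submodule R M) (j : ℤ) : ℕ :=
  Module.finrank k ((ℳ j).map (N.mkQ.restrictScalars k))

/-- `F_n(M,R,I,d)(y)`. -/
def FnGen (k : Type*) {R M : Type*} [Field k] [CommRing R] [Algebra k R]
    [AddCommGroup M] [Module R M] [Module k M] [IsScalarTower k R M]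
    (ℳ : ℤ → Submodule k M) (I : Ideal R) (p d n : ℕ) (y : ℂ) : ℂ :=
  (1 / (p : ℂ) ^ n) ^ d *
    ∑' j : ℤ, (quotPieceDim k (R := R) ℳ (bracketPow I (p ^ n) • ⊤) j : ℂ) *
      Complex.exp (-Complex.I * y * (j : ℂ) / (p : ℂ) ^ n)

/-- The `n`-th term of the sequence `d!·n^{-d}·Σ_{j ≤ n} λ_k(R_j)` computing the
Hilbert–Samuel multiplicity of a graded ring/module. -/
def hsSeq (k : Type*) {R : Type*} [Field k] [AddCommGroup R] [Module k R]
    (𝒜 : ℤ → Submodule k R) (d n : ℕ) : ℝ :=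
  (d.factorial : ℝ) / (n : ℝ) ^ d *
    ∑' j : ℤ, (if j ≤ (n : ℤ) then (Module.finrank k (𝒜 j) : ℝ) else 0)
/-- Weighted degree of an exponent vector. -/
def wdeg {d : ℕ} (δ : Fin d → ℕ) (α : Fin d → ℕ) : ℕ := ∑ l, α l * δ l

/-- Exponent vectors of weighted degree at most `n`. -/
def wset {d : ℕ} (δ : Fin d → ℕ) (n : ℕ) : Finset (Fin d → ℕ) :=
  (Fintype.piFinset fun _ => Finset.range (n + 1)).filter fun α => wdeg δ α ≤ n

lemma wdeg_add {d : ℕ} (δ α β : Fin d → ℕ) : wdeg δ (α + β) = wdeg δ α + wdeg δ β := by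
  simp [wdeg, add_mul, Finset.sum_add_distrib]

lemma le_wdeg {d : ℕ} {δ : Fin d → ℕ} (hδ : ∀ j, 0 < δ j) (α : Fin d → ℕ) (l : Fin d) :
    α l ≤ wdeg δ α :=
  (Nat.le_mul_of_pos_right _ (hδ l)).trans
    (Finset.single_le_sum (f := fun l => α l * δ l) (fun _ _ => Nat.zero_le _)
      (Finset.mem_univ l))

lemma mem_wset {d : ℕ} {δ : Fin d → ℕ} (hδ : ∀ j, 0 < δ j) {n : ℕ} {α : Fin d → ℕ} :
    α ∈ wset δ n ↔ wdeg δ α ≤ n := by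
  simp only [wset, Finset.mem_filter, Fintype.mem_piFinset, Finset.mem_range]
  exact ⟨fun h => h.2, fun h => ⟨fun l => by have := le_wdeg hδ α l; omega, h⟩⟩

lemma card_wset_one (d n : ℕ) : (wset (fun _ : Fin d => 1) n).card = (n + d).choose d := by
  have h := Finset.card_finsuppAntidiag_nat_eq_choose (s := (Finset.univ : Finset (Fin (d + 1)))) n
  have h2 : (wset (fun _ : Fin d => 1) n).card =
      (Finset.finsuppAntidiag (Finset.univ : Finset (Fin (d + 1))) n).card := by
    refine Finset.card_bij' (fun α _ => Finsupp.equivFunOnFinite.symm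
      (Fin.cons (n - ∑ l, α l) α : Fin (d + 1) → ℕ)) (fun β _ => fun l => β l.succ) ?_ ?_ ?_ ?_
    · intro α hα
      rw [mem_wset (fun _ => one_pos)] at hα
      simp only [wdeg, mul_one] at hα
      simp [Finset.mem_finsuppAntidiag, Fin.sum_univ_succ]
      omega
    · intro β hβ
      rw [mem_wset (fun _ => one_pos)]
      simp [Finset.mem_finsuppAntidiag, Fin.sum_univ_succ] at hβ
      simp only [wdeg, mul_one]
      omega
    · intro α hα
      ext l
      simp
    · intro β hβ
      simp [Finset.mem_finsuppAntidiag, Fin.sum_univ_succ] at hβ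
      ext l
      refine Fin.cases ?_ (fun l => ?_) l
      · simp
        omega
      · simp
  rw [h2, h]
  simp
  rw [add_comm d n, Nat.choose_symm_add]

lemma card_wset_lower {d : ℕ} {δ : Fin d → ℕ} (hδ : ∀ j, 0 < δ j) (n : ℕ) :
    (n + d).choose d ≤ (wset δ n).card * ∏ l, δ l := by
  have : (Fintype.piFinset fun l => Finset.range (δ l)).card = ∏ l, δ l := by simp
  rw [← card_wset_one, ← this, ← Finset.card_product]
  refine Finset.card_le_card_of_injOn (fun β => (fun l => β l / δ l, fun l => β l % δ l)) ?_ ?_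
  · intro β hβ
    simp only [Finset.mem_coe] at hβ ⊢
    rw [mem_wset (fun _ => one_pos)] at hβ
    rw [Finset.mem_product, mem_wset hδ]
    refine ⟨le_trans ?_ hβ, by simpa using fun l => Nat.mod_lt _ (hδ l)⟩
    simp only [wdeg, mul_one]
    exact Finset.sum_le_sum fun l _ => Nat.div_mul_le_self _ _
  · intro β _ β' _ h
    simp only [Prod.mk.injEq] at h
    ext l
    have h1 : β l / δ l = β' l / δ l := congrFun h.1 l
    have h2 : β l % δ l = β' l % δ l := congrFun h.2 l
    rw [← Nat.div_add_mod (β l) (δ l), h1, h2, Nat.div_add_mod]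

lemma card_wset_upper {d : ℕ} {δ : Fin d → ℕ} (hδ : ∀ j, 0 < δ j) (n : ℕ) :
    (wset δ n).card * ∏ l, δ l ≤ (n + (∑ l, δ l) + d).choose d := by
  have : (Fintype.piFinset fun l => Finset.range (δ l)).card = ∏ l, δ l := by simp
  rw [← card_wset_one, ← this, ← Finset.card_product]
  refine Finset.card_le_card_of_injOn (fun x => fun l => x.1 l * δ l + x.2 l) ?_ ?_
  · rintro ⟨α, ρ⟩ hx
    simp only [Finset.mem_coe, Finset.mem_product, Fintype.mem_piFinset, Finset.mem_range] at hx ⊢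
    rw [mem_wset hδ] at hx
    rw [mem_wset (fun _ => one_pos)]
    simp only [wdeg, mul_one, Finset.sum_add_distrib] at hx ⊢
    exact add_le_add hx.1 (Finset.sum_le_sum fun l _ => (hx.2 l).le)
  · rintro ⟨α, ρ⟩ hx ⟨α', ρ'⟩ hx' h
    simp only [Finset.mem_coe, Finset.mem_product, Fintype.mem_piFinset, Finset.mem_range] at hx hx'
    simp only at h
    have h1 : ∀ l, α l = α' l := fun l => by
      have e1 : (α l * δ l + ρ l) / δ l = α l := by
        rw [mul_comm, Nat.mul_add_div (hδ l), Nat.div_eq_of_lt (hx.2 l), add_zero]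
      have e2 : (α' l * δ l + ρ' l) / δ l = α' l := by
        rw [mul_comm, Nat.mul_add_div (hδ l), Nat.div_eq_of_lt (hx'.2 l), add_zero]
      rw [← e1, ← e2, congrFun h l]
    have h2 : ∀ l, ρ l = ρ' l := fun l => by
      have := congrFun h l
      simp only [h1 l] at this
      omega
    rw [Prod.mk.injEq]
    exact ⟨funext h1, funext h2⟩

lemma tendsto_choose_shift (d c : ℕ) :
    Tendsto (fun n : ℕ => ((n + c).choose d : ℝ) / (n : ℝ) ^ d) atTop
      (nhds (1 / (d.factorial : ℝ))) := by
  have h0 : Tendsto (fun n : ℕ => ((n.choose d : ℕ) : ℝ) / ((n : ℝ) ^ d / (d.factorial : ℝ)))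
      atTop (nhds 1) := by
    refine (Asymptotics.isEquivalent_iff_tendsto_one ?_).1 (isEquivalent_choose d)
    filter_upwards [eventually_gt_atTop 0] with n hn
    positivity
  have h1 := h0.comp (tendsto_add_atTop_nat c)
  have h2 : Tendsto (fun n : ℕ => (((n + c : ℕ) : ℝ) / (n : ℝ)) ^ d) atTop (nhds (1 ^ d)) := by
    refine Tendsto.pow ?_ d
    have : Tendsto (fun n : ℕ => 1 + (c : ℝ) / (n : ℝ)) atTop (nhds (1 + 0)) :=
      tendsto_const_nhds.add (tendsto_const_div_atTop_nhds_zero_nat _)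
    rw [add_zero] at this
    refine this.congr' ?_
    filter_upwards [eventually_gt_atTop 0] with n hn
    have : (n : ℝ) ≠ 0 := by positivity
    push_cast
    field_simp
  have h3 := (h1.mul h2).div_const (d.factorial : ℝ)
  simp only [one_pow, one_mul] at h3
  refine h3.congr' ?_
  filter_upwards [eventually_gt_atTop 0] with n hn
  have : (n : ℝ) ≠ 0 := by positivity
  have : ((n : ℝ) + c) ≠ 0 := by positivity
  simp only [Function.comp]
  push_cast
  rw [div_pow]
  field_simp

lemma tendsto_wset {d : ℕ} {δ : Fin d → ℕ} (hδ : ∀ j, 0 < δ j) :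
    Tendsto (fun n : ℕ => ((wset δ n).card : ℝ) / (n : ℝ) ^ d) atTop
      (nhds (1 / ((d.factorial : ℝ) * ∏ l, (δ l : ℝ)))) := by
  have hP : 0 < ∏ l, (δ l : ℝ) := Finset.prod_pos fun l _ => by exact_mod_cast hδ l
  have h1 := (tendsto_choose_shift d d).div_const (∏ l, (δ l : ℝ))
  have h2 := (tendsto_choose_shift d ((∑ l, δ l) + d)).div_const (∏ l, (δ l : ℝ))
  rw [div_div] at h1 h2
  refine tendsto_of_tendsto_of_tendsto_of_le_of_le h1 h2 (fun n => ?_) (fun n => ?_)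
  · have := card_wset_lower hδ n
    have h : ((n + d).choose d : ℝ) ≤ (wset δ n).card * ∏ l, (δ l : ℝ) := by exact_mod_cast this
    simp only
    rw [div_div, mul_comm, ← div_div]
    gcongr
    rwa [div_le_iff₀ hP]
  · have := card_wset_upper hδ n
    have h : (wset δ n).card * ∏ l, (δ l : ℝ) ≤ ((n + (∑ l, δ l) + d).choose d : ℝ) := by
      exact_mod_cast this
    simp only
    rw [div_div, mul_comm, ← div_div, ← add_assoc]
    gcongr
    rwa [le_div_iff₀ hP]

section Std
variable {k V X : Type*} [Field k] [AddCommGroup V] [Module k V] [LinearOrder X]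

/-- Indices whose vector is not in the span of the earlier ones. -/
def stdSet (k : Type*) {V X : Type*} [Field k] [AddCommGroup V] [Module k V] [LinearOrder X]
    (v : X → V) : Set X :=
  {x | v x ∉ Submodule.span k (v '' Set.Iio x)}

lemma std_span [WellFoundedLT X] (v : X → V) :
    Submodule.span k (Set.range v) ≤ Submodule.span k (v '' stdSet k v) := by
  rw [Submodule.span_le]
  rintro _ ⟨x, rfl⟩
  induction x using WellFoundedLT.induction with
  | ind x ih =>
    by_cases hx : x ∈ stdSet k v
    · exact Submodule.subset_span ⟨x, hx, rfl⟩
    · simp only [stdSet, Set.mem_ofPred_eq, not_not] at hx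
      refine (Submodule.span_le.2 ?_) hx
      rintro _ ⟨y, hy, rfl⟩
      exact ih y hy

lemma std_indep (v : X → V) : LinearIndepOn k v (stdSet k v) := by
  rw [linearIndepOn_iff]
  intro l hl h0
  by_contra hne
  have hs : l.support.Nonempty := Finsupp.support_nonempty_iff.2 hne
  set x := l.support.max' hs with hxdef
  have hx : x ∈ l.support := Finset.max'_mem _ _
  have hxE : x ∈ stdSet k v := (Finsupp.mem_supported _ _).1 hl hx
  refine hxE ?_
  rw [Finsupp.linearCombination_apply, Finsupp.sum, ← Finset.add_sum_erase _ _ hx] at h0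
  have hlx : l x ≠ 0 := Finsupp.mem_support_iff.1 hx
  have h1 : l x • v x ∈ Submodule.span k (v '' Set.Iio x) := by
    rw [eq_neg_of_add_eq_zero_left h0]
    refine Submodule.neg_mem _ (Submodule.sum_mem _ fun y hy => Submodule.smul_mem _ _
      (Submodule.subset_span ⟨y, ?_, rfl⟩))
    have hy' := Finset.mem_erase.1 hy
    exact lt_of_le_of_ne (Finset.le_max' _ _ hy'.2) hy'.1
  have h2 := Submodule.smul_mem _ (l x)⁻¹ h1
  rwa [smul_smul, inv_mul_cancel₀ hlx, one_smul] at h2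
end Std

/-- Monomials in `f`. -/
def fmon {R : Type*} [CommRing R] {d : ℕ} (f : Fin d → R) (α : Fin d → ℕ) : R := ∏ l, f l ^ α l

lemma fmon_add {R : Type*} [CommRing R] {d : ℕ} (f : Fin d → R) (α β : Fin d → ℕ) :
    fmon f (α + β) = fmon f α * fmon f β := by
  simp [fmon, pow_add, Finset.prod_mul_distrib]

lemma fmon_single {R : Type*} [CommRing R] {d : ℕ} (f : Fin d → R) (l : Fin d) :
    fmon f (Pi.single l 1) = f l := by
  rw [fmon, Finset.prod_eq_single l]
  · simp
  · intro b _ hb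
    simp [Pi.single_eq_of_ne hb]
  · simp

section Graded
variable {k R : Type*} [Field k] [CommRing R] [Algebra k R]
  (𝒜 : ℤ → Submodule k R) [GradedAlgebra 𝒜]

lemma proj_mem_span {X : Type*} (v : X → R) (dg : X → ℤ) (hv : ∀ x, v x ∈ 𝒜 (dg x)) (E : Set X)
    (j : ℤ) {z : R} (hz : z ∈ Submodule.span k (v '' E)) :
    GradedAlgebra.proj 𝒜 j z ∈ Submodule.span k (v '' {x | x ∈ E ∧ dg x = j}) := by
  have : Submodule.span k (v '' E) ≤ (Submodule.span k (v '' {x | x ∈ E ∧ dg x = j})).comap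
      (GradedAlgebra.proj 𝒜 j) := by
    rw [Submodule.span_le]
    rintro _ ⟨x, hx, rfl⟩
    simp only [Submodule.comap_coe, Set.mem_preimage, SetLike.mem_coe, GradedAlgebra.proj_apply]
    by_cases h : dg x = j
    · rw [DirectSum.decompose_of_mem_same 𝒜 (h ▸ hv x)]
      exact Submodule.subset_span ⟨x, ⟨hx, h⟩, rfl⟩
    · rw [DirectSum.decompose_of_mem_ne 𝒜 (hv x) h]
      exact Submodule.zero_mem _
  exact this hz

lemma piece_eq_span {X : Type*} (v : X → R) (dg : X → ℤ) (hv : ∀ x, v x ∈ 𝒜 (dg x)) (E : Set X)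
    (hE : ∀ z, z ∈ Submodule.span k (v '' E)) (j : ℤ) :
    𝒜 j = Submodule.span k (v '' {x | x ∈ E ∧ dg x = j}) := by
  refine le_antisymm (fun z hz => ?_) ?_
  · have := proj_mem_span 𝒜 v dg hv E j (hE z)
    rwa [GradedAlgebra.proj_apply, DirectSum.decompose_of_mem_same 𝒜 hz] at this
  · rw [Submodule.span_le]
    rintro _ ⟨x, ⟨_, h⟩, rfl⟩
    exact h ▸ hv x

lemma fmon_mem {d : ℕ} (f : Fin d → R) (δ : Fin d → ℕ) (hf : ∀ j, f j ∈ 𝒜 (δ j))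
    (α : Fin d → ℕ) : fmon f α ∈ 𝒜 (wdeg δ α : ℕ) := by
  have : ((wdeg δ α : ℕ) : ℤ) = ∑ l, α l • (δ l : ℤ) := by simp [wdeg]
  rw [this]
  exact SetLike.prod_mem_graded _ _ _ fun l _ => SetLike.pow_mem_graded _ (hf l)

lemma proj_mul_left {a : R} {i : ℤ} (ha : a ∈ 𝒜 i) (b : R) (j : ℤ) :
    GradedAlgebra.proj 𝒜 j (a * b) = a * GradedAlgebra.proj 𝒜 (j - i) b := by
  obtain ⟨t, rfl⟩ : ∃ t, j = i + t := ⟨j - i, by omega⟩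
  rw [add_sub_cancel_left, GradedAlgebra.proj_apply, GradedAlgebra.proj_apply,
    DirectSum.coe_decompose_mul_add_of_left_mem 𝒜 ha]

lemma nakayama_span (hneg : ∀ t : ℤ, t < 0 → 𝒜 t = ⊥) {d : ℕ} (f : Fin d → R) (δ : Fin d → ℕ)
    (hδ : ∀ j, 0 < δ j) (hf : ∀ j, f j ∈ 𝒜 (δ j)) {ι : Type*} (u : ι → R) (a : ι → ℕ)
    (hu : ∀ i, u i ∈ 𝒜 (a i))
    (hspan : ∀ z, ∃ s ∈ Submodule.span k (Set.range u), ∃ r : Fin d → R, z = s + ∑ l, f l * r l) :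
    ∀ z, z ∈ Submodule.span k (Set.range fun x : (Fin d → ℕ) × ι => fmon f x.1 * u x.2) := by
  set P := Submodule.span k (Set.range fun x : (Fin d → ℕ) × ι => fmon f x.1 * u x.2) with hP
  have hmul : ∀ l, ∀ z ∈ P, f l * z ∈ P := by
    intro l z hz
    have : P ≤ P.comap (LinearMap.mulLeft k (f l)) := by
      conv_lhs => rw [hP]
      rw [Submodule.span_le]
      rintro _ ⟨⟨α, i⟩, rfl⟩
      refine Submodule.subset_span ⟨(Pi.single l 1 + α, i), ?_⟩
      simp [fmon_add, fmon_single, mul_assoc]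
    exact this hz
  have huP : Submodule.span k (Set.range u) ≤ P := by
    rw [Submodule.span_le]
    rintro _ ⟨i, rfl⟩
    refine Submodule.subset_span ⟨(0, i), ?_⟩
    simp [fmon]
  have key : ∀ n : ℕ, ∀ x ∈ 𝒜 (n : ℤ), x ∈ P := by
    intro n
    induction n using Nat.strong_induction_on with
    | _ n ih =>
      intro x hx
      obtain ⟨s, hs, r, hxe⟩ := hspan x
      have h1 : GradedAlgebra.proj 𝒜 n x = x := by
        rw [GradedAlgebra.proj_apply, DirectSum.decompose_of_mem_same 𝒜 hx]
      rw [← h1, hxe, map_add, map_sum]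
      refine Submodule.add_mem _ ?_ (Submodule.sum_mem _ fun l _ => ?_)
      · rw [← Set.image_univ] at hs
        refine huP (Submodule.span_mono (Set.image_subset_range _ _)
          (proj_mem_span 𝒜 u (fun i => (a i : ℤ)) hu Set.univ n hs))
      · rw [proj_mul_left 𝒜 (hf l)]
        refine hmul l _ ?_
        have hm : GradedAlgebra.proj 𝒜 ((n : ℤ) - δ l) (r l) ∈ 𝒜 ((n : ℤ) - δ l) := by
          rw [GradedAlgebra.proj_apply]
          exact SetLike.coe_mem _
        by_cases hlt : (n : ℤ) - δ l < 0
        · rw [hneg _ hlt, Submodule.mem_bot] at hm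
          rw [hm]
          exact Submodule.zero_mem _
        · have e : ((n - δ l : ℕ) : ℤ) = (n : ℤ) - δ l := by omega
          rw [← e] at hm ⊢
          exact ih _ (by have := hδ l; omega) _ hm
  intro z
  classical
  rw [← DirectSum.sum_support_decompose 𝒜 z]
  refine Submodule.sum_mem _ fun i _ => ?_
  have hm : (DirectSum.decompose 𝒜 z i : R) ∈ 𝒜 i := SetLike.coe_mem _
  by_cases hlt : i < 0
  · have h0 := (hneg _ hlt).le hm
    rw [Submodule.mem_bot] at h0
    rw [h0]
    exact Submodule.zero_mem _
  · lift i to ℕ using by omega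
    exact key _ _ hm

end Graded

section Struct
variable {k R : Type*} [Field k] [CommRing R] [Algebra k R]

/-- Degree of an index `(α, i)`. -/
def xdeg {d : ℕ} (δ : Fin d → ℕ) {ι : Type*} (a : ι → ℕ) (x : (Fin d → ℕ) × ι) : ℕ :=
  wdeg δ x.1 + a x.2

lemma exists_std {d m : ℕ} (f : Fin d → R) (u : Fin m → R)
    (hs : ∀ z, z ∈ Submodule.span k
      (Set.range fun x : (Fin d → ℕ) × Fin m => fmon f x.1 * u x.2)) :
    ∃ E : Set ((Fin d → ℕ) × Fin m),
      (∀ α β i, (α + β, i) ∈ E → (α, i) ∈ E) ∧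
      LinearIndepOn k (fun x : (Fin d → ℕ) × Fin m => fmon f x.1 * u x.2) E ∧
      ∀ z, z ∈ Submodule.span k ((fun x : (Fin d → ℕ) × Fin m => fmon f x.1 * u x.2) '' E) := by
  let v' : Lex (Lex (Fin d → ℕ) × Fin m) → R :=
    fun x => fmon f (ofLex (ofLex x).1) * u (ofLex x).2
  let φ : (Fin d → ℕ) × Fin m → Lex (Lex (Fin d → ℕ) × Fin m) := fun x => toLex (toLex x.1, x.2)
  have hφ : Function.Injective φ := by
    rintro ⟨α, i⟩ ⟨β, j⟩ h
    simpa [φ] using h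
  have hφs : Function.Surjective φ := fun x => ⟨(ofLex (ofLex x).1, (ofLex x).2), rfl⟩
  refine ⟨φ ⁻¹' stdSet k v', ?_, ?_, ?_⟩
  · intro α β i h
    by_contra hn
    simp only [stdSet, Set.mem_preimage, Set.mem_ofPred_eq, not_not] at h hn
    refine h ?_
    have hle : Submodule.span k (v' '' Set.Iio (φ (α, i))) ≤
        (Submodule.span k (v' '' Set.Iio (φ (α + β, i)))).comap
          (LinearMap.mulLeft k (fmon f β)) := by
      rw [Submodule.span_le]
      rintro _ ⟨y, hy, rfl⟩
      obtain ⟨⟨γ, j⟩, rfl⟩ := hφs y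
      refine Submodule.subset_span ⟨φ (γ + β, j), ?_, ?_⟩
      · simp only [Set.mem_Iio, φ, Prod.Lex.toLex_lt_toLex] at hy ⊢
        rcases hy with hy | ⟨hy, hy2⟩
        · left
          rw [toLex_add, toLex_add]
          exact add_lt_add_left hy _
        · right
          exact ⟨by rw [toLex_add, toLex_add, hy], hy2⟩
      · simp [v', φ, fmon_add]
        ring
    have := hle hn
    simp only [Submodule.mem_comap, LinearMap.mulLeft_apply] at this
    convert this using 1
    simp [v', φ, fmon_add]
    ring
  · have := std_indep (k := k) v'
    exact LinearIndependent.comp this (fun x : φ ⁻¹' stdSet k v' => ⟨φ x.1, x.2⟩)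
      (fun x y h => Subtype.ext (hφ (congrArg Subtype.val h)))
  · intro z
    have h1 := std_span (k := k) v'
    have e1 : Set.range v' = Set.range fun x : (Fin d → ℕ) × Fin m => fmon f x.1 * u x.2 := by
      rw [← hφs.range_comp]
      rfl
    have e2 : v' '' stdSet k v' =
        (fun x : (Fin d → ℕ) × Fin m => fmon f x.1 * u x.2) '' (φ ⁻¹' stdSet k v') := by
      conv_lhs => rw [← Set.image_preimage_eq (stdSet k v') hφs]
      rw [Set.image_image]
      rfl
    rw [← e2]
    exact h1 (e1 ▸ hs z)

open Classical in
/-- Indices in `E` of degree exactly `n`. -/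
def efin {d : ℕ} (δ : Fin d → ℕ) {ι : Type*} [Fintype ι] (a : ι → ℕ)
    (E : Set ((Fin d → ℕ) × ι)) (n : ℕ) : Finset ((Fin d → ℕ) × ι) :=
  (wset δ n ×ˢ Finset.univ).filter fun x => x ∈ E ∧ xdeg δ a x = n

lemma mem_efin {d : ℕ} {δ : Fin d → ℕ} (hδ : ∀ j, 0 < δ j) {ι : Type*} [Fintype ι] {a : ι → ℕ}
    {E : Set ((Fin d → ℕ) × ι)} {n : ℕ} {x : (Fin d → ℕ) × ι} :
    x ∈ efin δ a E n ↔ x ∈ E ∧ xdeg δ a x = n := by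
  simp only [efin, Finset.mem_filter, Finset.mem_product, mem_wset hδ, Finset.mem_univ, and_true,
    and_iff_right_iff_imp]
  rintro ⟨_, h⟩
  simp only [xdeg] at h
  omega

variable (𝒜 : ℤ → Submodule k R) [GradedAlgebra 𝒜]

lemma vmem {d : ℕ} {f : Fin d → R} {δ : Fin d → ℕ}
    (hf : ∀ j, f j ∈ 𝒜 (δ j)) {ι : Type*} {u : ι → R} {a : ι → ℕ}
    (hu : ∀ i, u i ∈ 𝒜 (a i)) (x : (Fin d → ℕ) × ι) :
    fmon f x.1 * u x.2 ∈ 𝒜 ((xdeg δ a x : ℕ) : ℤ) := by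
  have := SetLike.mul_mem_graded (fmon_mem 𝒜 f δ hf x.1) (hu x.2)
  rwa [← Nat.cast_add] at this

lemma piece_eq {d : ℕ} {f : Fin d → R} {δ : Fin d → ℕ} (hδ : ∀ j, 0 < δ j)
    (hf : ∀ j, f j ∈ 𝒜 (δ j)) {ι : Type*} [Fintype ι] {u : ι → R} {a : ι → ℕ}
    (hu : ∀ i, u i ∈ 𝒜 (a i)) (E : Set ((Fin d → ℕ) × ι))
    (hE : ∀ z, z ∈ Submodule.span k ((fun x : (Fin d → ℕ) × ι => fmon f x.1 * u x.2) '' E))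
    (n : ℕ) :
    𝒜 n = Submodule.span k ((fun x : (Fin d → ℕ) × ι => fmon f x.1 * u x.2) ''
      (efin δ a E n : Set _)) := by
  rw [piece_eq_span 𝒜 _ (fun x => ((xdeg δ a x : ℕ) : ℤ)) (vmem 𝒜 hf hu) E hE n]
  congr 2
  ext x
  simp [mem_efin hδ]

lemma finrank_piece_le {d : ℕ} {f : Fin d → R} {δ : Fin d → ℕ} (hδ : ∀ j, 0 < δ j)
    (hf : ∀ j, f j ∈ 𝒜 (δ j)) {ι : Type*} [Fintype ι] {u : ι → R} {a : ι → ℕ}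
    (hu : ∀ i, u i ∈ 𝒜 (a i)) (E : Set ((Fin d → ℕ) × ι))
    (hE : ∀ z, z ∈ Submodule.span k ((fun x : (Fin d → ℕ) × ι => fmon f x.1 * u x.2) '' E))
    (n : ℕ) : Module.finrank k (𝒜 n) ≤ (efin δ a E n).card := by
  classical
  rw [piece_eq 𝒜 hδ hf hu E hE n, ← Finset.coe_image]
  exact (finrank_span_finset_le_card _).trans Finset.card_image_le

lemma finrank_piece_eq {d : ℕ} {f : Fin d → R} {δ : Fin d → ℕ} (hδ : ∀ j, 0 < δ j)
    (hf : ∀ j, f j ∈ 𝒜 (δ j)) {ι : Type*} [Fintype ι] {u : ι → R} {a : ι → ℕ}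
    (hu : ∀ i, u i ∈ 𝒜 (a i)) (E : Set ((Fin d → ℕ) × ι))
    (hE : ∀ z, z ∈ Submodule.span k ((fun x : (Fin d → ℕ) × ι => fmon f x.1 * u x.2) '' E))
    (hi : LinearIndepOn k (fun x : (Fin d → ℕ) × ι => fmon f x.1 * u x.2) E)
    (n : ℕ) : Module.finrank k (𝒜 n) = (efin δ a E n).card := by
  classical
  rw [piece_eq 𝒜 hδ hf hu E hE n]
  have h2 : LinearIndepOn k (fun x : (Fin d → ℕ) × ι => fmon f x.1 * u x.2)
      (efin δ a E n : Set _) := hi.mono fun x hx => ((mem_efin hδ).1 hx).1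
  have h3 := finrank_span_eq_card h2
  rw [Set.image_eq_range]
  simpa using h3

lemma hs_upper {d : ℕ} {f : Fin d → R} {δ : Fin d → ℕ} (hδ : ∀ j, 0 < δ j)
    (hf : ∀ j, f j ∈ 𝒜 (δ j)) {ι : Type*} [Fintype ι] {u : ι → R} {a : ι → ℕ}
    (hu : ∀ i, u i ∈ 𝒜 (a i))
    (hE : ∀ z, z ∈ Submodule.span k (Set.range fun x : (Fin d → ℕ) × ι => fmon f x.1 * u x.2))
    (n : ℕ) : ∑ j ∈ Finset.range (n + 1), Module.finrank k (𝒜 (j : ℕ)) ≤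
      Fintype.card ι * (wset δ n).card := by
  classical
  have hE' : ∀ z, z ∈ Submodule.span k
      ((fun x : (Fin d → ℕ) × ι => fmon f x.1 * u x.2) '' Set.univ) := by
    intro z
    rw [Set.image_univ]
    exact hE z
  refine (Finset.sum_le_sum fun j _ => finrank_piece_le 𝒜 hδ hf hu Set.univ hE' j).trans ?_
  rw [← Finset.card_biUnion, mul_comm, ← Finset.card_univ, ← Finset.card_product]
  · refine Finset.card_le_card fun x hx => ?_
    simp only [Finset.mem_biUnion, Finset.mem_range, mem_efin hδ, xdeg] at hx
    obtain ⟨j, hj, _, hx⟩ := hx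
    simp only [Finset.mem_product, mem_wset hδ, Finset.mem_univ, and_true]
    omega
  · intro i _ j _ hij
    rw [Function.onFun, Finset.disjoint_left]
    intro x hx hx'
    rw [mem_efin hδ] at hx hx'
    exact hij (hx.2.symm.trans hx'.2)

lemma hs_lower {d : ℕ} {f : Fin d → R} {δ : Fin d → ℕ} (hδ : ∀ j, 0 < δ j)
    (hf : ∀ j, f j ∈ 𝒜 (δ j)) {ι : Type*} [Fintype ι] {u : ι → R} {a : ι → ℕ}
    (hu : ∀ i, u i ∈ 𝒜 (a i)) (E : Set ((Fin d → ℕ) × ι))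
    (hE : ∀ z, z ∈ Submodule.span k ((fun x : (Fin d → ℕ) × ι => fmon f x.1 * u x.2) '' E))
    (hi : LinearIndepOn k (fun x : (Fin d → ℕ) × ι => fmon f x.1 * u x.2) E)
    (B : Finset ι) (hB : ∀ i ∈ B, ∀ α, (α, i) ∈ E) (A : ℕ) (hA : ∀ i, a i ≤ A) (n : ℕ) :
    B.card * (wset δ n).card ≤ ∑ j ∈ Finset.range (n + A + 1), Module.finrank k (𝒜 (j : ℕ)) := by
  classical
  rw [Finset.sum_congr rfl fun j _ => finrank_piece_eq 𝒜 hδ hf hu E hE hi j]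
  rw [← Finset.card_biUnion, mul_comm, ← Finset.card_product]
  · refine Finset.card_le_card fun x hx => ?_
    simp only [Finset.mem_product, mem_wset hδ] at hx
    simp only [Finset.mem_biUnion, Finset.mem_range, mem_efin hδ, xdeg]
    exact ⟨_, by have := hA x.2; omega, hB _ hx.2 x.1, rfl⟩
  · intro i _ j _ hij
    rw [Function.onFun, Finset.disjoint_left]
    intro x hx hx'
    rw [mem_efin hδ] at hx hx'
    exact hij (hx.2.symm.trans hx'.2)

open Classical in
lemma quot_le {d : ℕ} {f : Fin d → R} {δ : Fin d → ℕ} (hδ : ∀ j, 0 < δ j)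
    (hf : ∀ j, f j ∈ 𝒜 (δ j)) {ι : Type*} [Fintype ι] {u : ι → R} {a : ι → ℕ}
    (hu : ∀ i, u i ∈ 𝒜 (a i)) (E : Set ((Fin d → ℕ) × ι))
    (hE : ∀ z, z ∈ Submodule.span k ((fun x : (Fin d → ℕ) × ι => fmon f x.1 * u x.2) '' E))
    (q : ℕ) (N : Ideal R) (hN : ∀ l, f l ^ q ∈ N)
    (n : ℕ) : quotPieceDim k (R := R) 𝒜 N n ≤
      ((efin δ a E n).filter fun x => ∀ l, x.1 l < q).card := by
  rw [quotPieceDim, piece_eq 𝒜 hδ hf hu E hE n, Submodule.map_span]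
  set v := fun x : (Fin d → ℕ) × ι => fmon f x.1 * u x.2 with hv
  set π := (Submodule.mkQ N).restrictScalars k with hπ
  have : Submodule.span k (π '' (v '' (efin δ a E n : Set _))) ≤
      Submodule.span k (((((efin δ a E n).filter fun x => ∀ l, x.1 l < q).image
        fun x => π (v x)) : Finset _) : Set _) := by
    rw [Submodule.span_le]
    rintro _ ⟨_, ⟨x, hx, rfl⟩, rfl⟩
    by_cases h : ∀ l, x.1 l < q
    · refine Submodule.subset_span ?_
      rw [Finset.mem_coe, Finset.mem_image]
      exact ⟨x, Finset.mem_filter.2 ⟨hx, h⟩, rfl⟩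
    · push Not at h
      obtain ⟨l, hl⟩ := h
      have h0 : π (v x) = 0 := by
        simp only [hπ, LinearMap.coe_restrictScalars, Submodule.mkQ_apply,
          Submodule.Quotient.mk_eq_zero, hv]
        refine Ideal.mul_mem_right _ _ ?_
        rw [fmon, ← Finset.mul_prod_erase _ _ (Finset.mem_univ l)]
        refine Ideal.mul_mem_right _ _ ?_
        rw [← Nat.sub_add_cancel hl, pow_add]
        exact Ideal.mul_mem_left _ _ (hN l)
      rw [h0]
      exact Submodule.zero_mem _
  refine (Submodule.finrank_mono this).trans ?_
  exact (finrank_span_finset_le_card _).trans Finset.card_image_le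

lemma quot_neg (hneg : ∀ t : ℤ, t < 0 → 𝒜 t = ⊥) (N : Ideal R) (j : ℤ) (hj : j < 0) :
    quotPieceDim k (R := R) 𝒜 N j = 0 := by
  rw [quotPieceDim, hneg j hj, Submodule.map_bot, finrank_bot]

end Struct

section Gens
variable {k R : Type*} [Field k] [CommRing R] [Algebra k R]

lemma bracketPow_eq {p : ℕ} (hp : p.Prime) [CharP R p] {d : ℕ} (f : Fin d → R) (n : ℕ) :
    (bracketPow (Ideal.span (Set.range f)) (p ^ n) • (⊤ : Submodule R R)) =
      Ideal.span (Set.range fun l => f l ^ p ^ n) := by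
  haveI : ExpChar R p := ExpChar.prime hp
  have h1 : bracketPow (Ideal.span (Set.range f)) (p ^ n) =
      Ideal.map (iterateFrobenius R p n) (Ideal.span (Set.range f)) := rfl
  rw [h1, Ideal.map_span, smul_eq_mul, Ideal.mul_top, ← Set.range_comp]
  rfl

lemma finite_quot [Algebra.FiniteType k R] (I : Ideal R) (h : IsFiniteLength R (R ⧸ I)) :
    Module.Finite k (R ⧸ I) := by
  have h1 := (isFiniteLength_iff_isNoetherian_isArtinian.1 h).2
  have h2 : IsArtinianRing (R ⧸ I) := isArtinian_of_tower R h1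
  exact Module.finite_of_isArtinianRing k (R ⧸ I)

variable (𝒜 : ℤ → Submodule k R) [GradedAlgebra 𝒜]

lemma homog_induction (hneg : ∀ t : ℤ, t < 0 → 𝒜 t = ⊥) (P : Submodule k R)
    (h : ∀ n : ℕ, 𝒜 n ≤ P) (z : R) : z ∈ P := by
  classical
  rw [← DirectSum.sum_support_decompose 𝒜 z]
  refine Submodule.sum_mem _ fun i _ => ?_
  have hm : (DirectSum.decompose 𝒜 z i : R) ∈ 𝒜 i := SetLike.coe_mem _
  by_cases hlt : i < 0
  · have h0 := (hneg _ hlt).le hm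
    rw [Submodule.mem_bot] at h0
    rw [h0]
    exact Submodule.zero_mem _
  · lift i to ℕ using by omega
    exact h _ hm

lemma span_of_quot {d : ℕ} (f : Fin d → R) {ι : Type*} (u : ι → R)
    (h : ∀ z, (Ideal.span (Set.range f)).mkQ.restrictScalars k z ∈
      (Submodule.span k (Set.range u)).map ((Ideal.span (Set.range f)).mkQ.restrictScalars k))
    (z : R) :
    ∃ s ∈ Submodule.span k (Set.range u), ∃ r : Fin d → R, z = s + ∑ l, f l * r l := by
  obtain ⟨s, hs, hsz⟩ := h z
  simp only [LinearMap.coe_restrictScalars, Submodule.mkQ_apply] at hsz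
  rw [eq_comm, Submodule.Quotient.eq, Ideal.mem_span_range_iff_exists_fun] at hsz
  obtain ⟨c, hc⟩ := hsz
  refine ⟨s, hs, c, ?_⟩
  rw [Finset.sum_congr rfl fun l _ => mul_comm (f l) (c l), hc]
  ring

lemma exists_gens (hneg : ∀ t : ℤ, t < 0 → 𝒜 t = ⊥) {d : ℕ} (f : Fin d → R)
    (hfin : Module.Finite k (R ⧸ Ideal.span (Set.range f))) :
    ∃ (m : ℕ) (u : Fin m → R) (a : Fin m → ℕ), (∀ i, u i ∈ 𝒜 (a i)) ∧
      ∀ z, ∃ s ∈ Submodule.span k (Set.range u), ∃ r : Fin d → R, z = s + ∑ l, f l * r l := by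
  set π := (Ideal.span (Set.range f)).mkQ.restrictScalars k with hπ
  obtain ⟨b, hb, hbs, hbi⟩ := exists_linearIndependent k (π '' {r | ∃ n : ℕ, r ∈ 𝒜 n})
  have hbf : b.Finite := hbi.setFinite
  haveI := hbf.fintype
  let e := Fintype.equivFin b
  have hch : ∀ i, ∃ r : R, ∃ n : ℕ, r ∈ 𝒜 n ∧ π r = (e.symm i : R ⧸ Ideal.span (Set.range f)) := by
    intro i
    obtain ⟨r, ⟨n, hn⟩, hr⟩ := hb (e.symm i).2
    exact ⟨r, n, hn, hr⟩
  choose u a hu hub using hch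
  refine ⟨_, u, a, hu, span_of_quot f u fun z => ?_⟩
  refine homog_induction 𝒜 hneg (((Submodule.span k (Set.range u)).map π).comap π) ?_ z
  intro n x hx
  rw [Submodule.mem_comap, Submodule.map_span]
  have h1 : π x ∈ Submodule.span k b := by
    rw [hbs]
    exact Submodule.subset_span ⟨x, ⟨n, hx⟩, rfl⟩
  refine Submodule.span_mono ?_ h1
  intro y hy
  refine ⟨u (e ⟨y, hy⟩), ⟨_, rfl⟩, ?_⟩
  rw [hub, Equiv.symm_apply_apply]

lemma hs_le_quot (hneg : ∀ t : ℤ, t < 0 → 𝒜 t = ⊥) {d : ℕ} (f : Fin d → R) (δ : Fin d → ℕ)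
    (hδ : ∀ j, 0 < δ j) (hf : ∀ j, f j ∈ 𝒜 (δ j)) (hfd : ∀ n : ℕ, Module.Finite k (𝒜 n))
    (M : ℕ) (hM : ∀ j : ℕ, M ≤ j → quotPieceDim k (R := R) 𝒜 (Ideal.span (Set.range f)) j = 0)
    (n : ℕ) :
    ∑ j ∈ Finset.range (n + 1), Module.finrank k (𝒜 (j : ℕ)) ≤
      (∑ j ∈ Finset.range M, quotPieceDim k (R := R) 𝒜 (Ideal.span (Set.range f)) (j : ℕ)) *
        (wset δ n).card := by
  set I := Ideal.span (Set.range f) with hI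
  set π := I.mkQ.restrictScalars k with hπ
  haveI : ∀ j : ℕ, Module.Finite k ((𝒜 j).map π) := fun j => inferInstance
  let W : ℕ → Submodule k (R ⧸ I) := fun j => (𝒜 j).map π
  let b : ∀ j : ℕ, Module.Basis (Fin (Module.finrank k (W j))) k (W j) :=
    fun j => Module.finBasis k (W j)
  let ι := Σ j : Fin M, Fin (Module.finrank k (W j))
  have hch : ∀ x : ι, ∃ r : R, r ∈ 𝒜 (x.1 : ℕ) ∧ π r = (b x.1 x.2 : R ⧸ I) := by
    intro x
    obtain ⟨r, hr, h⟩ := (b x.1 x.2).2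
    exact ⟨r, hr, h⟩
  choose u hu hub using hch
  have hcard : Fintype.card ι = ∑ j ∈ Finset.range M, quotPieceDim k (R := R) 𝒜 I (j : ℕ) := by
    rw [Fintype.card_sigma, Finset.sum_range]
    simp only [Fintype.card_fin]
    rfl
  rw [← hcard]
  refine hs_upper 𝒜 hδ hf (u := u) (a := fun x => (x.1 : ℕ)) hu ?_ n
  refine nakayama_span 𝒜 hneg f δ hδ hf u (fun x => (x.1 : ℕ)) hu (span_of_quot f u fun z => ?_)
  refine homog_induction 𝒜 hneg (((Submodule.span k (Set.range u)).map π).comap π) ?_ z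
  intro j x hx
  rw [Submodule.mem_comap]
  have hxW : π x ∈ W j := ⟨x, hx, rfl⟩
  by_cases hj : j < M
  · have h2 : (⟨π x, hxW⟩ : W j) ∈ Submodule.span k (Set.range (b j)) := by
      rw [(b j).span_eq]
      trivial
    have h3 := Submodule.mem_map_of_mem (f := (W j).subtype) h2
    rw [Submodule.map_span] at h3 ⊢
    refine Submodule.span_mono ?_ h3
    rintro _ ⟨_, ⟨i, rfl⟩, rfl⟩
    exact ⟨u ⟨⟨j, hj⟩, i⟩, ⟨_, rfl⟩, hub _⟩
  · have h0 : Module.finrank k (W j) = 0 := hM j (by omega)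
    have h1 : W j = ⊥ := Submodule.finrank_eq_zero.1 h0
    rw [h1, Submodule.mem_bot] at hxW
    rw [hxW]
    exact Submodule.zero_mem _

end Gens

section Analytic

lemma tsum_int_eq {F : Type*} [AddCommMonoid F] [TopologicalSpace F]
    (g : ℤ → F) (M : ℕ) (h1 : ∀ j : ℤ, j < 0 → g j = 0) (h2 : ∀ j : ℕ, M ≤ j → g j = 0) :
    ∑' j : ℤ, g j = ∑ j ∈ Finset.range M, g (j : ℕ) := by
  rw [tsum_eq_sum (s := (Finset.range M).map Nat.castEmbedding)]
  · rw [Finset.sum_map]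
    rfl
  · intro j hj
    by_cases hlt : j < 0
    · exact h1 j hlt
    · lift j to ℕ using by omega
      refine h2 j ?_
      by_contra hn
      exact hj (Finset.mem_map.2 ⟨j, Finset.mem_range.2 (by omega), rfl⟩)

lemma compare_sums (M : ℕ) (a b s : ℕ → ℕ) (h1 : ∀ j < M, a j ≤ b j + s j)
    (h2 : ∑ j ∈ Finset.range M, b j ≤ ∑ j ∈ Finset.range M, a j) (w : ℕ → ℂ) (C : ℝ)
    (hC : 0 ≤ C) (hw : ∀ j < M, ‖w j‖ ≤ C) :
    ‖∑ j ∈ Finset.range M, (a j : ℂ) * w j - ∑ j ∈ Finset.range M, (b j : ℂ) * w j‖ ≤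
      C * (2 * ((∑ j ∈ Finset.range M, s j : ℕ) : ℝ)) := by
  rw [← Finset.sum_sub_distrib]
  have h2' : ∑ j ∈ Finset.range M, (b j : ℝ) ≤ ∑ j ∈ Finset.range M, (a j : ℝ) := by
    exact_mod_cast h2
  calc _ ≤ ∑ j ∈ Finset.range M, ‖(a j : ℂ) * w j - (b j : ℂ) * w j‖ := norm_sum_le _ _
    _ ≤ ∑ j ∈ Finset.range M, C * (2 * (s j : ℝ) - ((a j : ℝ) - b j)) := by
      refine Finset.sum_le_sum fun j hj => ?_
      have hj' := Finset.mem_range.1 hj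
      have e : (a j : ℂ) * w j - (b j : ℂ) * w j = (((a j : ℝ) - (b j : ℝ) : ℝ) : ℂ) * w j := by
        push_cast
        ring
      rw [e, norm_mul, Complex.norm_real, mul_comm]
      have h3 : (a j : ℝ) ≤ b j + s j := by exact_mod_cast h1 j hj'
      refine mul_le_mul (hw j hj') ?_ (norm_nonneg _) hC
      rw [Real.norm_eq_abs, abs_le]
      constructor
      · have : (0 : ℝ) ≤ s j := Nat.cast_nonneg _
        linarith
      · linarith
    _ = C * (2 * ∑ j ∈ Finset.range M, (s j : ℝ) -
          (∑ j ∈ Finset.range M, (a j : ℝ) - ∑ j ∈ Finset.range M, (b j : ℝ))) := by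
      rw [← Finset.mul_sum, Finset.sum_sub_distrib, Finset.sum_sub_distrib, Finset.mul_sum]
    _ ≤ _ := by
      push_cast
      refine mul_le_mul_of_nonneg_left ?_ hC
      linarith

lemma sum_fiber {X F : Type*} [Semiring F] (S : Finset X) (g : X → ℕ) (M : ℕ)
    (hM : ∀ x ∈ S, g x < M) (w : ℕ → F) :
    ∑ j ∈ Finset.range M, ((S.filter fun x => g x = j).card : F) * w j = ∑ x ∈ S, w (g x) := by
  rw [← Finset.sum_fiberwise_of_maps_to (t := Finset.range M) (g := g)
    (fun x hx => Finset.mem_range.2 (hM x hx))]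
  refine Finset.sum_congr rfl fun j _ => ?_
  rw [Finset.sum_congr rfl (g := fun _ => w j), Finset.sum_const, nsmul_eq_mul]
  intro x hx
  rw [(Finset.mem_filter.1 hx).2]

/-- The box of exponent vectors with all entries less than `q`. -/
def qbox (d q : ℕ) : Finset (Fin d → ℕ) := Fintype.piFinset fun _ => Finset.range q

lemma mem_qbox {d q : ℕ} {α : Fin d → ℕ} : α ∈ qbox d q ↔ ∀ l, α l < q := by simp [qbox]

lemma card_qbox (d q : ℕ) : (qbox d q).card = q ^ d := by simp [qbox]

lemma wdeg_qbox {d q : ℕ} (δ : Fin d → ℕ) {α : Fin d → ℕ} (h : ∀ l, α l < q) :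
    wdeg δ α ≤ q * ∑ l, δ l := by
  rw [wdeg, Finset.mul_sum]
  exact Finset.sum_le_sum fun l _ => Nat.mul_le_mul_right _ (h l).le

open Classical in
lemma small_card {d m : ℕ} (E : Set ((Fin d → ℕ) × Fin m))
    (hE : ∀ α β i, (α + β, i) ∈ E → (α, i) ∈ E) (B : Finset (Fin m))
    (hB : ∀ i, i ∉ B → ∃ α, (α, i) ∉ E) :
    ∃ K : ℕ, ∀ q, q * ((qbox d q ×ˢ Finset.univ).filter fun x => x ∈ E ∧ x.2 ∉ B).card ≤
      K * q ^ d := by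
  have hB' : ∀ i, ∃ α : Fin d → ℕ, i ∉ B → (α, i) ∉ E := by
    intro i
    by_cases hi : i ∈ B
    · exact ⟨0, fun h => absurd hi h⟩
    · obtain ⟨α, h⟩ := hB i hi
      exact ⟨α, fun _ => h⟩
  choose α₀ hα₀ using hB'
  refine ⟨∑ i, ∑ l, α₀ i l, fun q => ?_⟩
  have hsub : ((qbox d q ×ˢ Finset.univ).filter fun x => x ∈ E ∧ x.2 ∉ B) ⊆
      Finset.univ.biUnion fun i : Fin m => Finset.univ.biUnion fun l : Fin d =>
        (Fintype.piFinset (Function.update (fun _ => Finset.range q) l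
          (Finset.range (α₀ i l)))).map ⟨fun α => (α, i), fun a b h => by simpa using h⟩ := by
    rintro ⟨α, i⟩ hx
    simp only [Finset.mem_filter, Finset.mem_product, mem_qbox, Finset.mem_univ, and_true] at hx
    obtain ⟨hq, hxE, hi⟩ := hx
    have : ∃ l, α l < α₀ i l := by
      by_contra hn
      push Not at hn
      refine hα₀ i hi (hE (α₀ i) (α - α₀ i) i ?_)
      have : α₀ i + (α - α₀ i) = α := by
        ext l
        simp [hn l]
      rwa [this]
    obtain ⟨l, hl⟩ := this
    simp only [Finset.mem_biUnion, Finset.mem_univ, true_and, Finset.mem_map]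
    refine ⟨i, l, α, ?_, rfl⟩
    rw [Fintype.mem_piFinset]
    intro l'
    by_cases h : l' = l
    · subst h
      simpa using hl
    · simpa [Function.update_of_ne h] using hq l'
  refine (Nat.mul_le_mul_left q ((Finset.card_le_card hsub).trans
    (Finset.card_biUnion_le.trans (Finset.sum_le_sum fun i _ => Finset.card_biUnion_le)))).trans ?_
  rw [Finset.mul_sum, Finset.sum_mul]
  refine Finset.sum_le_sum fun i _ => ?_
  rw [Finset.mul_sum, Finset.sum_mul]
  refine Finset.sum_le_sum fun l _ => ?_
  rw [Finset.card_map, Fintype.card_piFinset, ← Finset.mul_prod_erase _ _ (Finset.mem_univ l)]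
  rw [Finset.prod_congr rfl (g := fun _ => q)]
  · have hd : 0 < d := l.pos
    simp only [Function.update_self, Finset.card_range, Finset.prod_const,
      Finset.card_erase_of_mem (Finset.mem_univ l), Finset.card_univ, Fintype.card_fin]
    have : q ^ d = q * q ^ (d - 1) := by
      rw [← pow_succ']
      congr 1
      omega
    rw [this]
    apply le_of_eq
    ring
  · intro l' hl'
    rw [Function.update_of_ne (Finset.ne_of_mem_erase hl'), Finset.card_range]

lemma tendsto_wset_shift {d : ℕ} {δ : Fin d → ℕ} (hδ : ∀ j, 0 < δ j) (A : ℕ) :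
    Tendsto (fun n : ℕ => ((wset δ (n + A)).card : ℝ) / (n : ℝ) ^ d) atTop
      (nhds (1 / ((d.factorial : ℝ) * ∏ l, (δ l : ℝ)))) := by
  have h1 := (tendsto_wset hδ).comp (tendsto_add_atTop_nat A)
  have h2 : Tendsto (fun n : ℕ => (((n + A : ℕ) : ℝ) / (n : ℝ)) ^ d) atTop (nhds (1 ^ d)) := by
    refine Tendsto.pow ?_ d
    have : Tendsto (fun n : ℕ => 1 + (A : ℝ) / (n : ℝ)) atTop (nhds (1 + 0)) :=
      tendsto_const_nhds.add (tendsto_const_div_atTop_nhds_zero_nat _)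
    rw [add_zero] at this
    refine this.congr' ?_
    filter_upwards [eventually_gt_atTop 0] with n hn
    have : (n : ℝ) ≠ 0 := by positivity
    push_cast
    field_simp
  have h3 := h1.mul h2
  simp only [one_pow, mul_one] at h3
  refine h3.congr' ?_
  filter_upwards [eventually_gt_atTop 0] with n hn
  have : (n : ℝ) ≠ 0 := by positivity
  have : ((n : ℝ) + A) ≠ 0 := by positivity
  simp only [Function.comp]
  push_cast
  rw [div_pow]
  field_simp

lemma tendsto_geom (y : ℂ) (hy : y ≠ 0) (δ : ℕ) (hδ : 0 < δ) :
    Tendsto (fun q : ℕ => (1 / (q : ℂ)) *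
      ∑ α ∈ Finset.range q, Complex.exp (-Complex.I * y * ((α * δ : ℕ) : ℂ) / (q : ℂ))) atTop
      (nhds ((1 - Complex.exp (-Complex.I * (δ : ℂ) * y)) / (Complex.I * y * δ))) := by
  set c : ℂ := -Complex.I * y * δ with hc
  have hδ' : (δ : ℂ) ≠ 0 := by exact_mod_cast hδ.ne'
  have hc0 : c ≠ 0 := by simp [hc, hy, hδ']
  have hlim : Tendsto (fun q : ℕ => (q : ℂ) * (Complex.exp (c / q) - 1)) atTop (nhds c) := by
    have hd : HasDerivAt (fun t : ℂ => Complex.exp (c * t)) c 0 := by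
      have := ((hasDerivAt_id (0 : ℂ)).const_mul c).cexp
      simpa using this
    have h1 := hd.tendsto_slope_zero
    have h2 : Tendsto (fun q : ℕ => ((q : ℂ))⁻¹) atTop (nhdsWithin 0 {0}ᶜ) := by
      refine tendsto_nhdsWithin_iff.2 ⟨?_, ?_⟩
      · exact tendsto_inv_atTop_nhds_zero_nat
      · filter_upwards [eventually_gt_atTop 0] with q hq
        simp [hq.ne']
    have h3 := h1.comp h2
    refine h3.congr fun q => ?_
    simp [div_eq_mul_inv]
  have hne : ∀ᶠ q : ℕ in atTop, (q : ℂ) * (Complex.exp (c / q) - 1) ≠ 0 :=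
    hlim.eventually_ne hc0
  have hdiv : Tendsto (fun q : ℕ => (Complex.exp c - 1) / ((q : ℂ) * (Complex.exp (c / q) - 1)))
      atTop (nhds ((Complex.exp c - 1) / c)) := tendsto_const_nhds.div hlim hc0
  have e : (1 - Complex.exp (-Complex.I * (δ : ℂ) * y)) / (Complex.I * y * δ) =
      (Complex.exp c - 1) / c := by
    have : -Complex.I * (δ : ℂ) * y = c := by rw [hc]; ring
    rw [this, ← neg_div_neg_eq]
    congr 1
    · ring
    · rw [hc]; ring
  rw [e]
  refine hdiv.congr' ?_
  filter_upwards [hne, eventually_gt_atTop 0] with q hq hq0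
  have hqc : (q : ℂ) ≠ 0 := by exact_mod_cast hq0.ne'
  have hx : Complex.exp (c / q) ≠ 1 := fun h => hq (by rw [h]; simp)
  have hs : ∑ α ∈ Finset.range q, Complex.exp (-Complex.I * y * ((α * δ : ℕ) : ℂ) / (q : ℂ)) =
      ∑ α ∈ Finset.range q, Complex.exp (c / q) ^ α := by
    refine Finset.sum_congr rfl fun α _ => ?_
    rw [← Complex.exp_nat_mul]
    congr 1
    rw [hc]
    push_cast
    ring
  rw [hs, geom_sum_eq hx, ← Complex.exp_nat_mul, mul_div_cancel₀ _ hqc]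
  rw [div_mul_div_comm, one_mul]

lemma tendsto_free {d m : ℕ} (δ : Fin d → ℕ) (hδ : ∀ j, 0 < δ j) (a : Fin m → ℕ)
    (B : Finset (Fin m)) (y : ℂ) (hy : y ≠ 0) :
    Tendsto (fun q : ℕ => (1 / (q : ℂ)) ^ d * ∑ x ∈ qbox d q ×ˢ B,
      Complex.exp (-Complex.I * y * ((xdeg δ a x : ℕ) : ℂ) / (q : ℂ))) atTop
      (nhds ((B.card : ℂ) * ∏ l, ((1 - Complex.exp (-Complex.I * (δ l : ℂ) * y)) /
        (Complex.I * y * δ l)))) := by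
  have h1 : Tendsto (fun q : ℕ => ∑ i ∈ B, Complex.exp (-Complex.I * y * (a i : ℂ) / (q : ℂ)))
      atTop (nhds (B.card : ℂ)) := by
    have : (B.card : ℂ) = ∑ i ∈ B, (1 : ℂ) := by simp
    rw [this]
    refine tendsto_finsetSum _ fun i _ => ?_
    rw [← Complex.exp_zero]
    exact (Complex.continuous_exp.tendsto 0).comp (tendsto_const_div_atTop_nhds_zero_nat _)
  have h2 := tendsto_finsetProd (Finset.univ : Finset (Fin d))
    (fun l _ => tendsto_geom y hy (δ l) (hδ l))
  refine (h1.mul h2).congr fun q => ?_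
  rw [Finset.prod_mul_distrib, Finset.prod_const, Finset.card_univ, Fintype.card_fin,
    Finset.prod_univ_sum, Finset.sum_product, mul_left_comm]
  congr 1
  rw [mul_comm, Finset.sum_mul]
  refine Finset.sum_congr rfl fun α _ => ?_
  rw [Finset.mul_sum]
  refine Finset.sum_congr rfl fun i _ => ?_
  rw [← Complex.exp_sum, ← Complex.exp_add]
  congr 1
  rw [← Finset.sum_div, ← Finset.mul_sum, ← add_div, ← mul_add]
  simp [xdeg, wdeg]

end Analytic

lemma length_lower {d : ℕ} {δ : Fin d → ℕ} (hδ : ∀ j, 0 < δ j) (q : ℕ) (hq : 0 < q) (b D A : ℕ)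
    (h : ∀ n, b * (wset δ n).card ≤ D * (wset (fun l => q * δ l) (n + A)).card) :
    b * q ^ d ≤ D := by
  have hδ' : ∀ j, 0 < q * δ j := fun j => Nat.mul_pos hq (hδ j)
  have hP : 0 < ∏ l, (δ l : ℝ) := Finset.prod_pos fun l _ => by exact_mod_cast hδ l
  have h1 := (tendsto_wset hδ).const_mul (b : ℝ)
  have h2 := (tendsto_wset_shift hδ' A).const_mul (D : ℝ)
  have h3 := le_of_tendsto_of_tendsto' h1 h2 (fun n => by
    rw [← mul_div_assoc, ← mul_div_assoc]
    have : (b : ℝ) * (wset δ n).card ≤ D * (wset (fun l => q * δ l) (n + A)).card := by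
      exact_mod_cast h n
    gcongr)
  simp only [Nat.cast_mul, Finset.prod_mul_distrib, Finset.prod_const, Finset.card_univ,
    Fintype.card_fin] at h3
  have hq' : (0 : ℝ) < q := by exact_mod_cast hq
  have hfac : (0 : ℝ) < d.factorial := by exact_mod_cast d.factorial_pos
  have e1 : (b : ℝ) * (1 / (d.factorial * ∏ l, (δ l : ℝ))) =
      (b * q ^ d) / (d.factorial * (q ^ d * ∏ l, (δ l : ℝ))) := by
    field_simp
  rw [e1, mul_one_div, div_le_div_iff_of_pos_right (by positivity)] at h3
  exact_mod_cast h3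

theorem frobenius_poincare_hsop
    (k R : Type) [Field k] [CommRing R] [Algebra k R] [Algebra.FiniteType k R]
    (p : ℕ) (hp : p.Prime) [CharP R p]
    (𝒜 : ℤ → Submodule k R) [GradedAlgebra 𝒜]
    (h𝒜neg : ∀ t : ℤ, t < 0 → 𝒜 t = ⊥)
    (h𝒜zero : ∀ x ∈ 𝒜 0, ∃ c : k, algebraMap k R c = x)
    (d : ℕ) (hd : ringKrullDim R = d)
    (f : Fin d → R) (δ : Fin d → ℕ) (hδpos : ∀ j, 0 < δ j)
    (hfhom : ∀ j, f j ∈ 𝒜 (δ j))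
    (hfl : IsFiniteLength R (R ⧸ Ideal.span (Set.range f)))
    (e : ℝ) (he : Tendsto (fun n : ℕ => hsSeq k 𝒜 d n) atTop (nhds e))
    (y : ℂ) (hy : y ≠ 0)
    (L : ℂ)
    (hL : Tendsto (fun n : ℕ => FnGen k 𝒜 (Ideal.span (Set.range f)) p d n y)
        atTop (nhds L)) :
    L = (e : ℂ) * ∏ j : Fin d, (1 - Complex.exp (-Complex.I * (δ j : ℂ) * y)) /
        (Complex.I * y) := by
  classical
  obtain ⟨m, u, a, hu, hgen⟩ := exists_gens 𝒜 h𝒜neg f (finite_quot (k := k) _ hfl)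
  have hspan := nakayama_span 𝒜 h𝒜neg f δ hδpos hfhom u a hu hgen
  obtain ⟨E, hEd, hEi, hEs⟩ := exists_std f u hspan
  set B : Finset (Fin m) := Finset.univ.filter fun i => ∀ α, (α, i) ∈ E with hBdef
  have hB : ∀ i ∈ B, ∀ α, (α, i) ∈ E := fun i hi => (Finset.mem_filter.1 hi).2
  have hB' : ∀ i, i ∉ B → ∃ α, (α, i) ∉ E := by
    intro i hi
    by_contra hn
    push Not at hn
    exact hi (Finset.mem_filter.2 ⟨Finset.mem_univ _, hn⟩)
  obtain ⟨K, hK⟩ := small_card E hEd B hB'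
  obtain ⟨A, hA⟩ : ∃ A, ∀ i, a i ≤ A :=
    ⟨∑ i, a i, fun i => Finset.single_le_sum (fun _ _ => Nat.zero_le _) (Finset.mem_univ i)⟩
  have hP : 0 < ∏ l, (δ l : ℝ) := Finset.prod_pos fun l _ => by exact_mod_cast hδpos l
  have hfd : ∀ n : ℕ, Module.Finite k (𝒜 n) := by
    intro n
    rw [piece_eq 𝒜 hδpos hfhom hu E hEs n, ← Finset.coe_image]
    exact Module.Finite.span_finset k _
  let N : ℕ → Ideal R := fun q => Ideal.span (Set.range fun l => f l ^ q)
  let aq : ℕ → ℕ → ℕ := fun q j => quotPieceDim k (R := R) 𝒜 (N q) (j : ℕ)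
  let M : ℕ → ℕ := fun q => q * (∑ l, δ l) + A + 1
  let S : ℕ → Finset ((Fin d → ℕ) × Fin m) :=
    fun q => (qbox d q ×ˢ Finset.univ).filter fun x => x ∈ E ∧ x.2 ∉ B
  let bq : ℕ → ℕ → ℕ := fun q j => ((qbox d q ×ˢ B).filter fun x => xdeg δ a x = j).card
  let sq : ℕ → ℕ → ℕ := fun q j => ((S q).filter fun x => xdeg δ a x = j).card
  have hxM : ∀ q (x : (Fin d → ℕ) × Fin m), (∀ l, x.1 l < q) → xdeg δ a x < M q := by
    intro q x hx
    have h1 := wdeg_qbox δ hx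
    have h2 := hA x.2
    simp only [xdeg, M]
    omega
  have hNmem : ∀ q l, f l ^ q ∈ N q := fun q l => Ideal.subset_span ⟨l, rfl⟩
  have hql := fun q j => quot_le 𝒜 hδpos hfhom hu E hEs q (N q) (hNmem q) j
  have haM : ∀ q j, M q ≤ j → aq q j = 0 := by
    intro q j hj
    refine Nat.le_zero.1 ((hql q j).trans (le_of_eq ?_))
    rw [Finset.card_eq_zero, Finset.filter_eq_empty_iff]
    intro x hx hxq
    have h1 := hxM q x hxq
    have h2 := ((mem_efin hδpos).1 hx).2
    omega
  have hab : ∀ q j, aq q j ≤ bq q j + sq q j := by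
    intro q j
    refine (hql q j).trans ?_
    refine (Finset.card_le_card ?_).trans (Finset.card_union_le _ _)
    intro x hx
    rw [Finset.mem_filter, mem_efin hδpos] at hx
    simp only [Finset.mem_union, Finset.mem_filter, Finset.mem_product, mem_qbox, S,
      Finset.mem_univ, and_true]
    by_cases hxB : x.2 ∈ B
    · exact Or.inl ⟨⟨hx.2, hxB⟩, hx.1.2⟩
    · exact Or.inr ⟨⟨hx.2, hx.1.1, hxB⟩, hx.1.2⟩
  have hbM : ∀ q, ∀ x ∈ qbox d q ×ˢ B, xdeg δ a x < M q := fun q x hx =>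
    hxM q x (mem_qbox.1 (Finset.mem_product.1 hx).1)
  have hsM : ∀ q, ∀ x ∈ S q, xdeg δ a x < M q := fun q x hx =>
    hxM q x (mem_qbox.1 (Finset.mem_product.1 (Finset.mem_filter.1 hx).1).1)
  have hbsum : ∀ q, ∑ j ∈ Finset.range (M q), bq q j = B.card * q ^ d := by
    intro q
    have := sum_fiber (F := ℕ) (qbox d q ×ˢ B) (xdeg δ a) (M q) (hbM q) (fun _ => 1)
    simp only [Nat.cast_id, mul_one, Finset.sum_const, smul_eq_mul, Finset.card_product,
      card_qbox] at this
    rw [mul_comm]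
    exact this
  have hssum : ∀ q, ∑ j ∈ Finset.range (M q), sq q j = (S q).card := by
    intro q
    have := sum_fiber (F := ℕ) (S q) (xdeg δ a) (M q) (hsM q) (fun _ => 1)
    simpa only [Nat.cast_id, mul_one, Finset.sum_const, smul_eq_mul] using this
  have hHup : ∀ q, 0 < q → ∀ n,
      ∑ j ∈ Finset.range (n + 1), Module.finrank k (𝒜 (j : ℕ)) ≤
        (∑ j ∈ Finset.range (M q), aq q j) * (wset (fun l => q * δ l) n).card := by
    intro q hq n
    refine hs_le_quot 𝒜 h𝒜neg (fun l => f l ^ q) (fun l => q * δ l)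
      (fun l => Nat.mul_pos hq (hδpos l)) (fun l => ?_) hfd (M q) (haM q) n
    have := SetLike.pow_mem_graded q (hfhom l)
    simpa using this
  have hHlow := hs_lower 𝒜 hδpos hfhom hu E hEs hEi B hB A hA
  have hD : ∀ q, 0 < q → B.card * q ^ d ≤ ∑ j ∈ Finset.range (M q), aq q j := fun q hq =>
    length_lower hδpos q hq _ _ A fun n => (hHlow n).trans (hHup q hq (n + A))
  have hhs : ∀ n, hsSeq k 𝒜 d n = (d.factorial : ℝ) / (n : ℝ) ^ d *
      ((∑ j ∈ Finset.range (n + 1), Module.finrank k (𝒜 (j : ℕ)) : ℕ) : ℝ) := by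
    intro n
    rw [hsSeq, tsum_int_eq _ (n + 1)]
    · push_cast
      congr 1
      refine Finset.sum_congr rfl fun j hj => ?_
      have := Finset.mem_range.1 hj
      rw [if_pos (by omega)]
    · intro j hj
      rw [h𝒜neg j hj, finrank_bot]
      simp
    · intro j hj
      rw [if_neg (by omega)]
  have hfac : (0 : ℝ) < d.factorial := by exact_mod_cast d.factorial_pos
  have he1 : (B.card : ℝ) / ∏ l, (δ l : ℝ) ≤ e := by
    have h1 := ((tendsto_wset hδpos).const_mul ((d.factorial : ℝ) * B.card))
    have h2 := he.comp (tendsto_add_atTop_nat A)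
    have h3 : Tendsto (fun n : ℕ => (((n + A : ℕ) : ℝ) / (n : ℝ)) ^ d) atTop (nhds (1 ^ d)) := by
      refine Tendsto.pow ?_ d
      have : Tendsto (fun n : ℕ => 1 + (A : ℝ) / (n : ℝ)) atTop (nhds (1 + 0)) :=
        tendsto_const_nhds.add (tendsto_const_div_atTop_nhds_zero_nat _)
      rw [add_zero] at this
      refine this.congr' ?_
      filter_upwards [eventually_gt_atTop 0] with n hn
      have : (n : ℝ) ≠ 0 := by positivity
      push_cast
      field_simp
    have h4 := h2.mul h3
    simp only [one_pow, mul_one] at h4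
    have h5 : (d.factorial : ℝ) * B.card * (1 / (d.factorial * ∏ l, (δ l : ℝ))) =
        (B.card : ℝ) / ∏ l, (δ l : ℝ) := by
      field_simp
    rw [h5] at h1
    refine le_of_tendsto_of_tendsto h1 h4 ?_
    filter_upwards [eventually_gt_atTop 0] with n hn
    simp only [Function.comp, hhs]
    have hl : (B.card : ℝ) * (wset δ n).card ≤
        ((∑ j ∈ Finset.range (n + A + 1), Module.finrank k (𝒜 (j : ℕ)) : ℕ) : ℝ) := by
      exact_mod_cast hHlow n
    have hn' : (0 : ℝ) < n := by exact_mod_cast hn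
    have hnA : (0 : ℝ) < ((n + A : ℕ) : ℝ) := by positivity
    set H := ((∑ j ∈ Finset.range (n + A + 1), Module.finrank k (𝒜 (j : ℕ)) : ℕ) : ℝ) with hH
    have e2 : (d.factorial : ℝ) / ((n + A : ℕ) : ℝ) ^ d * H * (((n + A : ℕ) : ℝ) / n) ^ d =
        d.factorial * H / (n : ℝ) ^ d := by
      rw [div_pow]
      field_simp
    rw [e2, ← mul_div_assoc, mul_assoc]
    gcongr
  have hSr : ∀ q : ℕ, 0 < q → ((S q).card : ℝ) ≤ K * (q : ℝ) ^ d / q := by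
    intro q hq
    have hq' : (0 : ℝ) < q := by exact_mod_cast hq
    rw [le_div_iff₀ hq', mul_comm]
    exact_mod_cast hK q
  have he2 : e ≤ (B.card : ℝ) / ∏ l, (δ l : ℝ) := by
    have hstep : ∀ q : ℕ, 0 < q → e ≤ ((B.card : ℝ) + K / q) / ∏ l, (δ l : ℝ) := by
      intro q hq
      have hq' : (0 : ℝ) < q := by exact_mod_cast hq
      set D := ∑ j ∈ Finset.range (M q), aq q j with hDdef
      have h1 := (tendsto_wset (δ := fun l => q * δ l)
        (fun l => Nat.mul_pos hq (hδpos l))).const_mul ((d.factorial : ℝ) * D)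
      have h2 := le_of_tendsto_of_tendsto' he h1 (fun n => by
        rw [hhs]
        have := hHup q hq n
        have hl : ((∑ j ∈ Finset.range (n + 1), Module.finrank k (𝒜 (j : ℕ)) : ℕ) : ℝ) ≤
            (D : ℝ) * (wset (fun l => q * δ l) n).card := by exact_mod_cast this
        calc _ ≤ (d.factorial : ℝ) / (n : ℝ) ^ d *
              ((D : ℝ) * (wset (fun l => q * δ l) n).card) := by gcongr
          _ = _ := by ring)
      have hDu : (D : ℝ) ≤ B.card * (q : ℝ) ^ d + K * (q : ℝ) ^ d / q := by
        have h3 : D ≤ B.card * q ^ d + (S q).card := by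
          rw [← hbsum, ← hssum, ← Finset.sum_add_distrib]
          exact Finset.sum_le_sum fun j _ => hab q j
        have h4 : (D : ℝ) ≤ B.card * (q : ℝ) ^ d + (S q).card := by exact_mod_cast h3
        linarith [hSr q hq]
      refine h2.trans ?_
      simp only [Nat.cast_mul, Finset.prod_mul_distrib, Finset.prod_const, Finset.card_univ,
        Fintype.card_fin]
      have e3 : (d.factorial : ℝ) * D * (1 / (d.factorial * ((q : ℝ) ^ d * ∏ l, (δ l : ℝ)))) =
          (D / (q : ℝ) ^ d) / ∏ l, (δ l : ℝ) := by
        field_simp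
      rw [e3]
      gcongr
      rw [div_le_iff₀ (by positivity)]
      refine hDu.trans (le_of_eq ?_)
      field_simp
    have hlim : Tendsto (fun q : ℕ => ((B.card : ℝ) + K / q) / ∏ l, (δ l : ℝ)) atTop
        (nhds (((B.card : ℝ) + 0) / ∏ l, (δ l : ℝ))) :=
      (tendsto_const_nhds.add (tendsto_const_div_atTop_nhds_zero_nat _)).div_const _
    rw [add_zero] at hlim
    refine ge_of_tendsto hlim ?_
    filter_upwards [eventually_gt_atTop 0] with q hq using hstep q hq
  have heq : e = (B.card : ℝ) / ∏ l, (δ l : ℝ) := le_antisymm he2 he1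
  let w : ℕ → ℕ → ℂ := fun q j => Complex.exp (-Complex.I * y * (j : ℂ) / (q : ℂ))
  have hFn : ∀ n, FnGen k 𝒜 (Ideal.span (Set.range f)) p d n y =
      (1 / ((p ^ n : ℕ) : ℂ)) ^ d *
        ∑ j ∈ Finset.range (M (p ^ n)), (aq (p ^ n) j : ℂ) * w (p ^ n) j := by
    intro n
    rw [FnGen, bracketPow_eq hp f n, tsum_int_eq _ (M (p ^ n))]
    · simp [aq, w, N]
    · intro j hj
      rw [quot_neg 𝒜 h𝒜neg _ j hj]
      simp
    · intro j hj
      have := haM (p ^ n) j hj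
      simp only [aq, N] at this
      rw [this]
      simp
  let C : ℝ := Real.exp (‖y‖ * ((∑ l, δ l : ℕ) + A + 1))
  have hwC : ∀ q, 0 < q → ∀ j < M q, ‖w q j‖ ≤ C := by
    intro q hq j hj
    have hq' : (0 : ℝ) < q := by exact_mod_cast hq
    have hq1 : (1 : ℝ) ≤ q := by exact_mod_cast hq
    refine (Complex.norm_exp_le_exp_norm _).trans (Real.exp_le_exp.2 ?_)
    simp only [norm_div, norm_mul, norm_neg, Complex.norm_I, one_mul, Complex.norm_natCast]
    rw [mul_div_assoc]
    refine mul_le_mul_of_nonneg_left ?_ (norm_nonneg _)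
    rw [div_le_iff₀ hq']
    have h1 : (j : ℝ) ≤ q * (∑ l, δ l : ℕ) + A + 1 := by
      have : j ≤ q * (∑ l, δ l) + A + 1 := hj.le
      exact_mod_cast this
    have hA0 : (0 : ℝ) ≤ A := Nat.cast_nonneg _
    nlinarith
  have hfree := tendsto_free δ hδpos a B y hy
  have hdiff : Tendsto (fun q : ℕ => (1 / (q : ℂ)) ^ d *
      ∑ j ∈ Finset.range (M q), (aq q j : ℂ) * w q j - (1 / (q : ℂ)) ^ d *
        ∑ x ∈ qbox d q ×ˢ B, w q (xdeg δ a x)) atTop (nhds 0) := by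
    have hb : Tendsto (fun q : ℕ => (C * 2 * K) / (q : ℝ)) atTop (nhds 0) :=
      tendsto_const_div_atTop_nhds_zero_nat _
    refine squeeze_zero_norm' ?_ hb
    filter_upwards [eventually_gt_atTop 0] with q hq
    have hq' : (0 : ℝ) < q := by exact_mod_cast hq
    have hC : 0 ≤ C := (Real.exp_pos _).le
    have hcmp := compare_sums (M q) (aq q) (bq q) (sq q) (fun j _ => hab q j)
      ((hbsum q).trans_le (hD q hq)) (w q) C hC (hwC q hq)
    rw [sum_fiber (F := ℂ) (qbox d q ×ˢ B) (xdeg δ a) (M q) (hbM q) (w q), hssum] at hcmp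
    rw [← mul_sub, norm_mul, norm_pow, norm_div, norm_one, Complex.norm_natCast]
    calc _ ≤ (1 / (q : ℝ)) ^ d * (C * (2 * (K * (q : ℝ) ^ d / q))) := by
          refine mul_le_mul_of_nonneg_left (hcmp.trans ?_) (by positivity)
          have := hSr q hq
          gcongr
      _ = _ := by
          rw [one_div, inv_pow]
          field_simp
  have hG := hdiff.add hfree
  simp only [zero_add] at hG
  have hG' := hG.comp (tendsto_pow_atTop_atTop_of_one_lt hp.one_lt)
  have hL' := hL.congr hFn
  have hLeq := tendsto_nhds_unique hL' (hG'.congr fun n => by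
    simp only [Function.comp, w]
    ring)
  rw [hLeq, heq]
  push_cast
  rw [div_mul_eq_mul_div, mul_div_assoc, ← Finset.prod_div_distrib]
  congr 1
  refine Finset.prod_congr rfl fun l _ => ?_
  rw [div_div]

end
end

section
/- Let R be a one-dimensional finitely generated ℕ-graded domain over an algebraically closed field k of characteristic p > 0, let I be a homogeneous ideal with R/I of finite length, and let h be the smallest integer such that I contains a nonzero homogeneous element of degree h. Then for every nonzero complex number y, F(R,R,I)(y) = e_R · (1 − e^{−ihy})/(iy), where e_R is the Hilbert–Samuel multiplicity of R. -/
open Filter Complex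

noncomputable section

lemma fp_abel (a z : ℕ → ℂ) (M : ℕ) :
    ∑ j ∈ Finset.range M, a j * z j = (∑ j ∈ Finset.range M, a j) * z M
      - ∑ j ∈ Finset.range M, (∑ i ∈ Finset.range (j+1), a i) * (z (j+1) - z j) := by
  induction M with
  | zero => simp
  | succ n ih =>
    rw [Finset.sum_range_succ, ih, Finset.sum_range_succ (fun j => (∑ i ∈ Finset.range (j+1), a i) * (z (j+1) - z j)), Finset.sum_range_succ a n]
    ring

lemma fp_abel_bound (a : ℕ → ℂ) (z : ℂ) (M : ℕ) (K E δ : ℝ) (hK : ∀ j ≤ M, ‖∑ i ∈ Finset.range j, a i‖ ≤ K)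
    (hE : ∀ j ≤ M, ‖z ^ j‖ ≤ E) (hδ : ‖z - 1‖ ≤ δ) :
    ‖∑ j ∈ Finset.range M, a j * z ^ j‖ ≤ K * E * (1 + M * δ) := by
  have hK0 : 0 ≤ K := (norm_nonneg _).trans (hK 0 (Nat.zero_le _))
  have hE0 : 0 ≤ E := (norm_nonneg _).trans (hE 0 (Nat.zero_le _))
  rw [fp_abel]
  refine (norm_sub_le _ _).trans ?_
  have h1 : ‖(∑ j ∈ Finset.range M, a j) * z ^ M‖ ≤ K * E := by
    rw [norm_mul]; exact mul_le_mul (hK M le_rfl) (hE M le_rfl) (norm_nonneg _) hK0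
  have h2 : ‖∑ j ∈ Finset.range M, (∑ i ∈ Finset.range (j+1), a i) * (z^(j+1) - z^j)‖ ≤ M * (K * (E * δ)) := by
    refine (norm_sum_le _ _).trans ?_
    refine (Finset.sum_le_card_nsmul _ _ (K * (E * δ)) ?_).trans ?_
    · intro j hj
      have hj := Finset.mem_range.1 hj
      have : z^(j+1) - z^j = z^j * (z-1) := by ring
      rw [norm_mul, this, norm_mul]
      exact mul_le_mul (hK _ hj) (mul_le_mul (hE _ hj.le) hδ (norm_nonneg _) hE0) (by positivity) hK0
    · simp
  nlinarith

lemma fp_exp_pow (y : ℂ) (q j : ℕ) : Complex.exp (-Complex.I * y * (j : ℂ) / (q:ℂ)) = Complex.exp (-Complex.I * y / q) ^ j := by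
  rw [← Complex.exp_nat_mul]; congr 1; ring

lemma fp_norm_pow_le (y : ℂ) (q j c : ℕ) (hq : 0 < q) (hj : j ≤ q * c) :
    ‖Complex.exp (-Complex.I * y / q) ^ j‖ ≤ Real.exp (‖y‖ * c) := by
  rw [← Complex.exp_nat_mul]
  refine (Complex.norm_exp_le_exp_norm _).trans (Real.exp_le_exp.2 ?_)
  have hq' : (0:ℝ) < q := by exact_mod_cast hq
  have hj' : (j:ℝ) ≤ q * c := by exact_mod_cast hj
  simp only [norm_mul, norm_div, norm_neg, Complex.norm_I, Complex.norm_natCast, one_mul]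
  rw [mul_div_assoc', div_le_iff₀ hq']
  nlinarith [norm_nonneg y]

lemma fp_small (a : ℕ → ℂ) (ha : ∀ ε > 0, ∃ C : ℝ, ∀ n : ℕ, ‖∑ i ∈ Finset.range n, a i‖ ≤ ε * n + C)
    (y : ℂ) (h : ℕ) :
    Tendsto (fun q : ℕ => (1 / (q:ℂ)) * ∑ j ∈ Finset.range (q * h), a j * Complex.exp (-Complex.I * y / q) ^ j)
      atTop (nhds 0) := by
  rw [Metric.tendsto_nhds]
  intro η hη
  set E := Real.exp (‖y‖ * h)
  set W := E * (1 + h * (2 * ‖y‖)) with hW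
  have hE : 0 < E := Real.exp_pos _
  have hW0 : 0 < W := by positivity
  obtain ⟨C, hC⟩ := ha (η / (2 * (h+1) * W)) (by positivity)
  have hC0 : 0 ≤ C := by simpa using hC 0
  have l1 : Tendsto (fun q : ℕ => (C * W) / (q:ℝ)) atTop (nhds 0) := tendsto_const_div_atTop_nhds_zero_nat _
  have l2 : Tendsto (fun q : ℕ => ‖y‖ / (q:ℝ)) atTop (nhds 0) := tendsto_const_div_atTop_nhds_zero_nat _
  filter_upwards [l1.eventually (gt_mem_nhds (half_pos hη)), l2.eventually (gt_mem_nhds one_pos), eventually_gt_atTop 0] with q h1 h2 hq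
  have hq' : (0:ℝ) < q := by exact_mod_cast hq
  rw [dist_zero_right, norm_mul]
  have nrm : ‖-Complex.I * y / q‖ = ‖y‖ / q := by simp
  have key := fp_abel_bound a (Complex.exp (-Complex.I * y / q)) (q*h) (η / (2 * (h+1) * W) * (q*h) + C) E (2 * (‖y‖/q))
    (fun j hj => (hC j).trans (by
      have : (j:ℝ) ≤ q * h := by exact_mod_cast hj
      gcongr))
    (fun j hj => fp_norm_pow_le y q j h hq hj)
    (by rw [← nrm]; exact Complex.norm_exp_sub_one_le (by rw [nrm]; exact h2.le))
  have e1 : (1 + ((q*h:ℕ):ℝ) * (2 * (‖y‖/q))) = 1 + h * (2 * ‖y‖) := by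
    push_cast; field_simp
  rw [e1, mul_assoc, ← hW] at key
  have e2 : ‖1 / (q:ℂ)‖ = 1 / q := by simp
  rw [e2]
  have e3 : (η / (2 * (h+1) * W) * (q*h) + C) * W / q = η/2 * (h / (h+1)) + C * W / q := by
    field_simp
  have e4 : (h:ℝ)/(h+1) ≤ 1 := by rw [div_le_one (by positivity)]; linarith
  calc _ ≤ 1 / (q:ℝ) * ((η / (2 * (h+1) * W) * (q*h) + C) * W) := by gcongr
    _ = η/2 * (h / (h+1)) + C * W / q := by rw [← e3]; ring
    _ < η := by nlinarith

lemma fp_geom (y : ℂ) (hy : y ≠ 0) (h : ℕ) :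
    Tendsto (fun q : ℕ => (1 / (q:ℂ)) * ∑ j ∈ Finset.range (q * h), Complex.exp (-Complex.I * y / q) ^ j)
      atTop (nhds ((1 - Complex.exp (-Complex.I * (h : ℂ) * y)) / (Complex.I * y))) := by
  set w := -Complex.I * y with hw
  have hw0 : w ≠ 0 := by simp [hw, hy]
  have d : HasDerivAt (fun t : ℂ => Complex.exp (w * t)) w 0 := by
    have := ((hasDerivAt_id (0:ℂ)).const_mul w).cexp
    simpa using this
  have s := d.tendsto_slope_zero
  have inv : Tendsto (fun q : ℕ => ((q:ℂ))⁻¹) atTop (nhdsWithin 0 {0}ᶜ) := by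
    refine tendsto_nhdsWithin_iff.2 ⟨tendsto_inv_atTop_nhds_zero_nat, ?_⟩
    filter_upwards [eventually_gt_atTop 0] with q hq
    simp; omega
  have s2 := s.comp inv
  have s3 : Tendsto (fun q : ℕ => (Complex.exp (w * h) - 1) / ((((q:ℂ))⁻¹)⁻¹ • (Complex.exp (w * (0 + (q:ℂ)⁻¹)) - Complex.exp (w * 0)))) atTop (nhds ((Complex.exp (w * h) - 1) / w)) :=
    tendsto_const_nhds.div s2 hw0
  have e0 : (1 - Complex.exp (-Complex.I * (h : ℂ) * y)) / (Complex.I * y) = (Complex.exp (w * h) - 1) / w := by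
    rw [show -Complex.I * (h : ℂ) * y = w * h by rw [hw]; ring, show Complex.I * y = -w by rw [hw]; ring, div_neg, ← neg_div, neg_sub]
  rw [e0]
  refine s3.congr' ?_
  filter_upwards [s2.eventually_ne hw0, eventually_gt_atTop 0] with q hne hq
  have hq' : (q:ℂ) ≠ 0 := by exact_mod_cast hq.ne'
  simp only [Function.comp, inv_inv, zero_add, mul_zero, Complex.exp_zero, smul_eq_mul, ← div_eq_mul_inv] at hne ⊢
  have hz : Complex.exp (w / q) ≠ 1 := by
    intro hh; simp [hh] at hne
  rw [geom_sum_eq hz, ← Complex.exp_nat_mul]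
  have : ((q*h:ℕ):ℂ) * (w / q) = w * h := by push_cast; field_simp
  rw [this]
  field_simp

lemma fp_main (H : ℕ → ℝ) (e : ℝ)
    (he : Tendsto (fun n : ℕ => (1 / (n:ℝ)) * ∑ j ∈ Finset.range (n+1), H j) atTop (nhds e))
    (y : ℂ) (hy : y ≠ 0) (h : ℕ) :
    Tendsto (fun q : ℕ => (1 / (q:ℂ)) * ∑ j ∈ Finset.range (q * h), (H j : ℂ) * Complex.exp (-Complex.I * y / q) ^ j)
      atTop (nhds ((e : ℂ) * (1 - Complex.exp (-Complex.I * (h : ℂ) * y)) / (Complex.I * y))) := by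
  have ha : ∀ ε > 0, ∃ C : ℝ, ∀ n : ℕ, ‖∑ i ∈ Finset.range n, ((H i : ℂ) - e)‖ ≤ ε * n + C := by
    intro ε hε
    have h1 := (Metric.tendsto_atTop.1 he) ε hε
    obtain ⟨N, hN⟩ := h1
    refine ⟨|e| + ∑ m ∈ Finset.range (N+2), ‖∑ i ∈ Finset.range m, ((H i : ℂ) - e)‖, fun n => ?_⟩
    by_cases hn : n < N + 2
    · have := Finset.single_le_sum (f := fun m => ‖∑ i ∈ Finset.range m, ((H i : ℂ) - e)‖) (fun _ _ => norm_nonneg _) (Finset.mem_range.2 hn)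
      have h3 : 0 ≤ ε * n := by positivity
      have := abs_nonneg e
      linarith
    · obtain ⟨m, rfl⟩ : ∃ m, n = m + 1 := ⟨n-1, by omega⟩
      have hm := hN m (by omega)
      have hm0 : (0:ℝ) < m := by have : 0 < m := by omega
                                 exact_mod_cast this
      have hs : ∑ i ∈ Finset.range (m+1), ((H i : ℂ) - e) = ((m * ((1 / (m:ℝ)) * ∑ j ∈ Finset.range (m+1), H j - e) - e : ℝ) : ℂ) := by
        have : (m:ℂ) ≠ 0 := by exact_mod_cast hm0.ne'
        simp only [Finset.sum_sub_distrib]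
        push_cast
        field_simp
        simp
        ring
      rw [hs, Complex.norm_real, Real.norm_eq_abs]
      rw [Real.dist_eq] at hm
      have t := abs_sub (m * ((1 / (m:ℝ)) * ∑ j ∈ Finset.range (m+1), H j - e)) e
      rw [abs_mul, abs_of_pos hm0] at t
      have t2 : 0 ≤ ∑ m ∈ Finset.range (N+2), ‖∑ i ∈ Finset.range m, ((H i : ℂ) - e)‖ := Finset.sum_nonneg fun _ _ => norm_nonneg _
      push_cast
      nlinarith
  have := (fp_small _ ha y h).add ((fp_geom y hy h).const_mul (e:ℂ))
  rw [zero_add, ← mul_div_assoc] at this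
  refine this.congr fun q => ?_
  simp only [sub_mul, Finset.sum_sub_distrib, ← Finset.mul_sum]
  ring

lemma fp_finite_quot (k R : Type) [Field k] [CommRing R] [IsDomain R]
    [Algebra k R] [Algebra.FiniteType k R] (hdim : ringKrullDim R = 1) (f : R) (hf : f ≠ 0) :
    Module.Finite k (R ⧸ Ideal.span {f}) := by
  rw [Module.finite_iff_krullDimLE_zero, Ring.krullDimLE_iff]
  have := ringKrullDim_quotient_succ_le_of_nonZeroDivisor (mem_nonZeroDivisors_of_ne_zero hf)
  rw [hdim] at this
  have h2 : ringKrullDim (R ⧸ Ideal.span {f}) + 1 ≤ 0 + 1 := by simpa using this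
  exact_mod_cast (ENat.WithBot.add_le_add_one_right_iff).1 h2

section
variable {k R : Type} [Field k] [CommRing R] [Algebra k R] (𝒜 : ℤ → Submodule k R) [GradedAlgebra 𝒜]

lemma fp_div {h m : ℤ} {f x : R} (hf : f ∈ 𝒜 h) (hx : x ∈ 𝒜 m) (hxf : x ∈ Ideal.span {f}) :
    ∃ y ∈ 𝒜 (m - h), x = f * y := by
  obtain ⟨z, rfl⟩ := Ideal.mem_span_singleton'.1 hxf
  refine ⟨DirectSum.decompose 𝒜 z (m-h), SetLike.coe_mem _, ?_⟩
  have := DirectSum.coe_decompose_mul_add_of_left_mem 𝒜 (j := m - h) (b := z) hf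
  rw [← this, add_sub_cancel, mul_comm f z, DirectSum.decompose_of_mem_same 𝒜 hx]

lemma fp_large {h : ℤ} {f : R} (hf : f ∈ 𝒜 h) [Module.Finite k (R ⧸ Ideal.span {f})] :
    ∃ N : ℕ, ∀ m : ℤ, (N:ℤ) ≤ m → ∀ x ∈ 𝒜 m, x ∈ Ideal.span {f} := by
  let S : Set ℤ := {m | ∃ x ∈ 𝒜 m, x ∉ Ideal.span {f}}
  have hSf : S.Finite := by
    choose! x hx hxf using (fun (m : ℤ) (hm : m ∈ S) => hm)
    have hom : (Ideal.span {f}).IsHomogeneous 𝒜 := Ideal.homogeneous_span _ _ (by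
      rintro _ rfl; exact ⟨h, hf⟩)
    have li : LinearIndependent k (fun m : S => (Ideal.Quotient.mk (Ideal.span {f}) (x m))) := by
      rw [linearIndependent_iff']
      intro s g hg i hi
      by_contra hgi
      have h1 : ∑ i ∈ s, g i • x i ∈ Ideal.span {f} := by
        rw [← Ideal.Quotient.eq_zero_iff_mem, map_sum, ← hg]
        rfl
      have h2 := hom i.1 h1
      rw [DirectSum.decompose_sum, DFinsupp.finsetSum_apply, AddSubmonoidClass.coe_finsetSum,
        Finset.sum_eq_single i] at h2
      · rw [DirectSum.decompose_of_mem_same 𝒜 ((𝒜 _).smul_mem _ (hx i i.2))] at h2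
        apply hxf i i.2
        have := (Ideal.span {f}).mul_mem_left (algebraMap k R (g i)⁻¹) h2
        rwa [← Algebra.smul_def, smul_smul, inv_mul_cancel₀ hgi, one_smul] at this
      · intro b _ hb
        exact DirectSum.decompose_of_mem_ne 𝒜 ((𝒜 _).smul_mem _ (hx b b.2)) (fun hh => hb (Subtype.ext hh))
      · exact fun hn => absurd hi hn
    exact Set.finite_coe_iff.1 (li.finite_of_isNoetherian)
  obtain ⟨B, hB⟩ := hSf.bddAbove
  refine ⟨(B + 1).toNat, fun m hm x hx => ?_⟩
  by_contra hxf
  have : m ≤ B := hB ⟨x, hx, hxf⟩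
  omega

lemma fp_finite_piece (hneg : ∀ t : ℤ, t < 0 → 𝒜 t = ⊥) {h : ℕ} (hh : 0 < h) {f : R} (hf : f ∈ 𝒜 h)
    [Module.Finite k (R ⧸ Ideal.span {f})] (n : ℕ) : ∀ m : ℤ, m < n → Module.Finite k (𝒜 m) := by
  induction n with
  | zero => intro m hm; rw [hneg m (by simpa using hm)]; infer_instance
  | succ n ih =>
    intro m hm
    have := ih (m - h) (by push_cast at hm; omega)
    let φ : 𝒜 m →ₗ[k] R ⧸ Ideal.span {f} := ((Ideal.Quotient.mkₐ k (Ideal.span {f})).toLinearMap).comp (𝒜 m).subtype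
    have hker : (LinearMap.ker φ).map (𝒜 m).subtype ≤ (𝒜 (m-h)).map (LinearMap.mulLeft k f) := by
      rintro _ ⟨x, hx, rfl⟩
      have hx' : (x:R) ∈ Ideal.span {f} := Ideal.Quotient.eq_zero_iff_mem.1 hx
      obtain ⟨y, hy, e⟩ := fp_div 𝒜 hf x.2 hx'
      exact ⟨y, hy, e.symm⟩
    have f1 : Module.Finite k ((𝒜 (m-h)).map (LinearMap.mulLeft k f)) := Module.Finite.map _ _
    have f2 : Module.Finite k ((LinearMap.ker φ).map (𝒜 m).subtype) := Submodule.finiteDimensional_of_le hker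
    have f3 : Module.Finite k (LinearMap.ker φ) :=
      Module.Finite.equiv (Submodule.equivMapOfInjective _ (𝒜 m).injective_subtype (LinearMap.ker φ)).symm
    have : Module.Finite k (𝒜 m ⧸ LinearMap.ker φ) := Module.Finite.equiv φ.quotKerEquivRange.symm
    exact Module.Finite.of_submodule_quotient (LinearMap.ker φ)

lemma fp_bound {h N : ℕ} (hh : 0 < h) {f : R} (hf : f ∈ 𝒜 h)
    (hfin : ∀ m : ℤ, Module.Finite k (𝒜 m))
    (hN : ∀ m : ℤ, (N:ℤ) ≤ m → ∀ x ∈ 𝒜 m, x ∈ Ideal.span {f}) (hneg : ∀ t : ℤ, t < 0 → 𝒜 t = ⊥) :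
    ∃ B : ℕ, ∀ m : ℤ, Module.finrank k (𝒜 m) ≤ B := by
  refine ⟨∑ i ∈ Finset.range N, Module.finrank k (𝒜 i), ?_⟩
  suffices H : ∀ n : ℕ, ∀ m : ℤ, m < n → Module.finrank k (𝒜 m) ≤ ∑ i ∈ Finset.range N, Module.finrank k (𝒜 i) from
    fun m => H (m+1).toNat m (by omega)
  intro n
  induction n with
  | zero => intro m hm; rw [hneg m (by simpa using hm)]; simp
  | succ n ih =>
    intro m hm
    by_cases hmN : (N:ℤ) ≤ m
    · refine le_trans ?_ (ih (m-h) (by push_cast at hm; omega))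
      have := hfin (m-h)
      refine le_trans (Submodule.finrank_mono (t := (𝒜 (m-h)).map (LinearMap.mulLeft k f)) ?_) (Submodule.finrank_map_le _ _)
      intro x hx
      obtain ⟨y, hy, e⟩ := fp_div 𝒜 hf hx (hN m hmN x hx)
      exact ⟨y, hy, e.symm⟩
    · by_cases hm0 : m < 0
      · rw [hneg m hm0]; simp
      · lift m to ℕ using (by omega)
        exact Finset.single_le_sum (f := fun i : ℕ => Module.finrank k (𝒜 i)) (fun _ _ => Nat.zero_le _) (Finset.mem_range.2 (by omega))

lemma fp_high {h N : ℕ} {f : R} (hf : f ∈ 𝒜 h)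
    (hN : ∀ m : ℤ, (N:ℤ) ≤ m → ∀ x ∈ 𝒜 m, x ∈ Ideal.span {f}) (q : ℕ) :
    ∀ m : ℤ, (N:ℤ) + q * h ≤ m → ∀ x ∈ 𝒜 m, f ^ q ∣ x := by
  induction q with
  | zero => simp
  | succ q ih =>
    intro m hm x hx
    push_cast at hm
    have h0 : (0:ℤ) ≤ (q:ℤ) * h := by positivity
    obtain ⟨y, hy, e⟩ := fp_div 𝒜 hf hx (hN m (by linarith) x hx)
    obtain ⟨z, rfl⟩ := ih (m - h) (by linarith) y hy
    exact ⟨z, by rw [e]; ring⟩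

lemma fp_low (p : ℕ) (hp : p.Prime) [CharP R p] (hneg : ∀ t : ℤ, t < 0 → 𝒜 t = ⊥)
    (I : Ideal R) (hI : Ideal.IsHomogeneous 𝒜 I) (h : ℕ)
    (hmin : ∀ h' : ℕ, (∃ x ∈ I, x ≠ 0 ∧ x ∈ 𝒜 (h' : ℤ)) → h ≤ h') (n : ℕ) (x : R)
    (hx : x ∈ bracketPow I (p^n)) : ∀ j : ℤ, j < ((p^n * h : ℕ) : ℤ) → (DirectSum.decompose 𝒜 x j : R) = 0 := by
  have := Fact.mk hp
  unfold bracketPow at hx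
  have hz0 : ∀ z ∈ I, ∀ i : ℤ, i < h → (DirectSum.decompose 𝒜 z i : R) = 0 := by
    intro z hz i hi
    by_contra hne
    by_cases hi0 : i < 0
    · have := SetLike.coe_mem (DirectSum.decompose 𝒜 z i)
      have h2 : (DirectSum.decompose 𝒜 z i : R) ∈ (⊥ : Submodule k R) := hneg i hi0 ▸ this
      exact hne (by simpa using h2)
    · lift i to ℕ using (by omega)
      have := hmin i ⟨_, hI i hz, hne, SetLike.coe_mem _⟩
      omega
  induction hx using Submodule.span_induction with
  | zero => simp
  | add x y _ _ hx hy => intro j hj; simp [hx j hj, hy j hj]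
  | mem x hx =>
    obtain ⟨z, hz, rfl⟩ := hx
    intro j hj
    classical
    simp only
    rw [← DirectSum.sum_support_decompose 𝒜 z, sum_pow_char_pow, DirectSum.decompose_sum,
      DFinsupp.finsetSum_apply, AddSubmonoidClass.coe_finsetSum]
    refine Finset.sum_eq_zero fun i _ => ?_
    by_cases hi : i < h
    · rw [hz0 z hz i hi, zero_pow (pow_ne_zero _ hp.ne_zero)]; simp
    · refine DirectSum.decompose_of_mem_ne 𝒜 (SetLike.pow_mem_graded _ (SetLike.coe_mem _)) ?_
      rw [nsmul_eq_mul]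
      have : ((p^n:ℕ):ℤ) * h ≤ ((p^n:ℕ):ℤ) * i := by
        apply mul_le_mul_of_nonneg_left (by omega) (by positivity)
      push_cast at *
      linarith
  | smul a x _ hx =>
    intro j hj
    classical
    rw [← DirectSum.sum_support_decompose 𝒜 a, smul_eq_mul, Finset.sum_mul, DirectSum.decompose_sum,
      DFinsupp.finsetSum_apply, AddSubmonoidClass.coe_finsetSum]
    refine Finset.sum_eq_zero fun i _ => ?_
    have e := DirectSum.coe_decompose_mul_add_of_left_mem 𝒜 (j := j - i) (b := x) (SetLike.coe_mem (DirectSum.decompose 𝒜 a i))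
    rw [add_sub_cancel] at e
    rw [e]
    by_cases hi : i < 0
    · have := SetLike.coe_mem (DirectSum.decompose 𝒜 a i)
      have h2 : (DirectSum.decompose 𝒜 a i : R) ∈ (⊥ : Submodule k R) := hneg i hi ▸ this
      rw [(Submodule.mem_bot k).1 h2, zero_mul]
    · rw [hx (j - i) (by omega), mul_zero]
end

lemma fp_qpd_low {k R : Type} [Field k] [CommRing R] [Algebra k R] (𝒜 : ℤ → Submodule k R) (J : Ideal R) (j : ℤ)
    (hJ : ∀ x ∈ 𝒜 j, x ∈ J → x = 0) :
    quotPieceDim k (R := R) 𝒜 (J • ⊤) j = Module.finrank k (𝒜 j) := by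
  unfold quotPieceDim
  rw [← LinearMap.range_domRestrict]
  apply LinearMap.finrank_range_of_inj
  rw [← LinearMap.ker_eq_bot, LinearMap.ker_eq_bot']
  rintro ⟨x, hx⟩ h0
  have : x ∈ (J • ⊤ : Submodule R R) := (Submodule.Quotient.mk_eq_zero _).1 h0
  rw [smul_eq_mul, Ideal.mul_top] at this
  exact Subtype.ext (hJ x hx this)

lemma fp_qpd_zero {k R : Type} [Field k] [CommRing R] [Algebra k R] (𝒜 : ℤ → Submodule k R) (J : Ideal R) (j : ℤ)
    (hJ : ∀ x ∈ 𝒜 j, x ∈ J) :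
    quotPieceDim k (R := R) 𝒜 (J • ⊤) j = 0 := by
  unfold quotPieceDim
  have : (𝒜 j).map (((J • ⊤ : Submodule R R)).mkQ.restrictScalars k) = ⊥ := by
    rw [eq_bot_iff]
    rintro _ ⟨x, hx, rfl⟩
    refine (Submodule.mem_bot k).2 ((Submodule.Quotient.mk_eq_zero _).2 ?_)
    rw [smul_eq_mul, Ideal.mul_top]
    exact hJ x hx
  rw [this]; simp

lemma fp_tsum_int {E : Type} [AddCommMonoid E] [TopologicalSpace E] (g : ℤ → E) (M : ℕ)
    (h0 : ∀ j : ℤ, j < 0 → g j = 0) (h1 : ∀ j : ℤ, (M:ℤ) ≤ j → g j = 0) :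
    ∑' j : ℤ, g j = ∑ j ∈ Finset.range M, g (j:ℤ) := by
  rw [tsum_eq_sum (s := (Finset.range M).map ⟨((↑) : ℕ → ℤ), Nat.cast_injective⟩)]
  · simp
  · intro j hj
    by_cases hj0 : j < 0
    · exact h0 j hj0
    · apply h1
      lift j to ℕ using (by omega)
      by_contra hlt
      apply hj
      simp only [Finset.mem_map, Finset.mem_range, Function.Embedding.coeFn_mk]
      exact ⟨j, by omega, rfl⟩

/-- **Frobenius–Poincaré functions in dimension one.**  For a one-dimensional finitely
generated `ℕ`-graded domain `R` over an algebraically closed field `k`, and `I` a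
homogeneous ideal of finite colength with `h` the least degree of a nonzero homogeneous
element of `I`, one has `F(R,R,I)(y) = e_R (1-e^{-ihy})/(iy)` for `y ≠ 0`. -/
theorem frobenius_poincare_dim_one
    (k R : Type) [Field k] [IsAlgClosed k] [CommRing R] [IsDomain R]
    [Algebra k R] [Algebra.FiniteType k R]
    (p : ℕ) (hp : p.Prime) [CharP R p]
    (𝒜 : ℤ → Submodule k R) [GradedAlgebra 𝒜]
    (h𝒜neg : ∀ t : ℤ, t < 0 → 𝒜 t = ⊥)
    (h𝒜zero : ∀ x ∈ 𝒜 0, ∃ c : k, algebraMap k R c = x)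
    (hdim : ringKrullDim R = 1)
    (I : Ideal R) (hI : Ideal.IsHomogeneous 𝒜 I) (hIfl : IsFiniteLength R (R ⧸ I))
    (h : ℕ) (hh : ∃ x ∈ I, x ≠ 0 ∧ x ∈ 𝒜 (h : ℤ))
    (hmin : ∀ h' : ℕ, (∃ x ∈ I, x ≠ 0 ∧ x ∈ 𝒜 (h' : ℤ)) → h ≤ h')
    (e : ℝ) (he : Tendsto (fun n : ℕ => hsSeq k 𝒜 1 n) atTop (nhds e))
    (y : ℂ) (hy : y ≠ 0)
    (L : ℂ) (hL : Tendsto (fun n : ℕ => FnGen k 𝒜 I p 1 n y) atTop (nhds L)) :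
    L = (e : ℂ) * (1 - Complex.exp (-Complex.I * (h : ℂ) * y)) / (Complex.I * y) := by
  obtain ⟨f, hfI, hf0, hf⟩ := hh
  obtain ⟨N, B, hN, hB⟩ : ∃ N B : ℕ, (∀ m : ℤ, (N:ℤ) ≤ m → ∀ x ∈ 𝒜 m, x ∈ Ideal.span {f}) ∧
      ∀ (n : ℕ) (j : ℤ), quotPieceDim k (R := R) 𝒜 (bracketPow I (p ^ n) • ⊤) j ≤ B := by
    rcases Nat.eq_zero_or_pos h with rfl | hpos
    · obtain ⟨c, rfl⟩ := h𝒜zero f (by simpa using hf)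
      have hc : c ≠ 0 := by rintro rfl; simp at hf0
      have hu : IsUnit (algebraMap k R c) := (IsUnit.mk0 c hc).map _
      refine ⟨0, 0, fun m _ x _ => by rw [Ideal.span_singleton_eq_top.2 hu]; trivial, fun n j => ?_⟩
      rw [fp_qpd_zero]
      intro x _
      have : (algebraMap k R c) ^ (p^n) ∈ bracketPow I (p^n) := Ideal.subset_span ⟨_, hfI, rfl⟩
      rw [Ideal.eq_top_of_isUnit_mem _ this (hu.pow _)]; trivial
    · have := fp_finite_quot k R hdim f hf0
      obtain ⟨N, hN⟩ := fp_large 𝒜 hf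
      have hfin : ∀ m : ℤ, Module.Finite k (𝒜 m) := fun m =>
        fp_finite_piece 𝒜 h𝒜neg hpos hf (m+1).toNat m (by omega)
      obtain ⟨B, hB⟩ := fp_bound 𝒜 hpos hf hfin hN h𝒜neg
      refine ⟨N, B, hN, fun n j => le_trans ?_ (hB j)⟩
      have := hfin j
      exact Submodule.finrank_map_le _ _
  have hlow : ∀ (n : ℕ) (j : ℤ), j < ((p^n * h : ℕ) : ℤ) →
      quotPieceDim k (R := R) 𝒜 (bracketPow I (p ^ n) • ⊤) j = Module.finrank k (𝒜 j) := by
    intro n j hj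
    apply fp_qpd_low
    intro x hx hxJ
    have := fp_low 𝒜 p hp h𝒜neg I hI h hmin n x hxJ j hj
    rwa [DirectSum.decompose_of_mem_same 𝒜 hx] at this
  have hhigh : ∀ (n : ℕ) (j : ℤ), ((p^n * h + N : ℕ) : ℤ) ≤ j →
      quotPieceDim k (R := R) 𝒜 (bracketPow I (p ^ n) • ⊤) j = 0 := by
    intro n j hj
    apply fp_qpd_zero
    intro x hx
    have hd := fp_high 𝒜 hf hN (p^n) j (by push_cast at hj ⊢; linarith) x hx
    exact Ideal.mem_of_dvd _ hd (Ideal.subset_span ⟨f, hfI, rfl⟩)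
  have hneg0 : ∀ j : ℤ, j < 0 → Module.finrank k (𝒜 j) = 0 := by
    intro j hj; rw [h𝒜neg j hj]; simp
  have he' : Tendsto (fun n : ℕ => (1 / (n:ℝ)) * ∑ j ∈ Finset.range (n+1), (Module.finrank k (𝒜 (j:ℤ)) : ℝ)) atTop (nhds e) := by
    refine he.congr fun n => ?_
    unfold hsSeq
    rw [fp_tsum_int _ (n+1)]
    · simp only [Nat.factorial_one, Nat.cast_one, pow_one]
      congr 1
      refine Finset.sum_congr rfl fun j hj => ?_
      have := Finset.mem_range.1 hj
      rw [if_pos (by omega)]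
    · intro j hj; simp [hneg0 j hj]
    · intro j hj; rw [if_neg (by push_cast at hj; omega)]
  have hpt : Tendsto (fun n : ℕ => p ^ n) atTop atTop := tendsto_pow_atTop_atTop_of_one_lt hp.one_lt
  have T1 := (fp_main _ e he' y hy h).comp hpt
  set D : ℕ → ℕ → ℂ := fun n j => (quotPieceDim k (R := R) 𝒜 (bracketPow I (p ^ n) • ⊤) (j:ℤ) : ℂ) with hD
  set Z : ℕ → ℂ := fun n => Complex.exp (-Complex.I * y / ((p^n : ℕ) : ℂ)) with hZ
  have T2 : Tendsto (fun n : ℕ => (1 / ((p^n : ℕ) : ℂ)) * ∑ i ∈ Finset.range N, D n (p^n*h+i) * Z n ^ (p^n*h+i))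
      atTop (nhds 0) := by
    refine squeeze_zero_norm (a := fun n => (N * (B * Real.exp (‖y‖ * (h + N : ℕ)))) / ((p^n : ℕ) : ℝ)) ?_ ?_
    · intro n
      have hq : 0 < p^n := pow_pos hp.pos n
      rw [norm_mul, norm_div, norm_one, Complex.norm_natCast, one_div_mul_eq_div]
      refine div_le_div_of_nonneg_right ?_ (Nat.cast_nonneg _)
      refine (norm_sum_le _ _).trans ((Finset.sum_le_card_nsmul _ _ (B * Real.exp (‖y‖ * (h + N : ℕ))) ?_).trans (by simp))
      intro i hi
      have hi := Finset.mem_range.1 hi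
      rw [norm_mul]
      refine mul_le_mul ?_ (fp_norm_pow_le y (p^n) _ (h+N) hq ?_) (norm_nonneg _) (by positivity)
      · simp only [hD, Complex.norm_natCast]
        exact_mod_cast hB n _
      · nlinarith
    · exact (tendsto_const_div_atTop_nhds_zero_nat ((N:ℝ) * (B * Real.exp (‖y‖ * (h + N : ℕ))))).comp hpt
  have T := T1.add T2
  rw [add_zero] at T
  refine tendsto_nhds_unique hL (T.congr fun n => ?_)
  unfold FnGen
  rw [fp_tsum_int _ (p^n*h+N)]
  · rw [Finset.sum_range_add, pow_one]
    simp only [Function.comp]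
    rw [← mul_add]
    push_cast
    congr 2
    · refine Finset.sum_congr rfl fun j hj => ?_
      have hj := Finset.mem_range.1 hj
      rw [hlow n j (by exact_mod_cast hj)]
      have := fp_exp_pow y (p^n) j
      push_cast at this
      rw [this]
    · refine Finset.sum_congr rfl fun i hi => ?_
      have := fp_exp_pow y (p^n) (p^n*h+i)
      simp only [hD, hZ, ← this]
      push_cast
      rfl
  · intro j hj
    rw [hlow n j (by have : (0:ℤ) ≤ ((p^n*h:ℕ):ℤ) := by positivity
                     omega), hneg0 j hj]
    simp
  · intro j hj
    rw [hhigh n j hj]; simp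

end
end
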